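/- Let M ≥ 3 be an integer and p ∈ [2, ∞) a real number. For every n ∈ ℕ and every M-linear form T : ℝⁿ × ℝⁿ × ⋯ × ℝⁿ → ℝ one has (∑_{i₂,…,i_M=1}^{n} (∑_{i₁=1}^{n} |T(e_{i₁},…,e_{i_M})|^{p/(p−1)})^{2(p−1)/p})^{1/2} ≤ (A_{p/(p−1)})^{M−1} · ‖T‖, where ‖T‖ := sup{|T(x^{(1)},…,x^{(M)})| : ‖x^{(1)}‖_{ℓ_p} ≤ 1 and ‖x^{(k)}‖_{ℓ_∞} ≤ 1 for k = 2,…,M}. -/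

import Mathlib

open MeasureTheory Real Filter

/-- The `j`-th Rademacher function, `r_j(t) = sgn(sin(2^j π t))`. -/
noncomputable def rademacher (j : ℕ) (t : ℝ) : ℝ :=
  Real.sign (Real.sin ((2 : ℝ) ^ j * Real.pi * t))

/-- `p₀ ∈ (1,2)` is the unique solution of `Γ((p₀+1)/2) = √π / 2`. -/
noncomputable def khintchineP0 : ℝ :=
  sInf {p : ℝ | 1 < p ∧ p < 2 ∧ Real.Gamma ((p + 1) / 2) = Real.sqrt Real.pi / 2}

/-- The optimal constant `A_r` in the Khintchine inequality. -/
noncomputable def khintchineA (r : ℝ) : ℝ :=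
  if r ≤ khintchineP0 then (2 : ℝ) ^ (1 / r - 1 / 2)
  else if r < 2 then
    (1 / Real.sqrt 2) * (Real.Gamma ((r + 1) / 2) / Real.sqrt Real.pi) ^ (-(1 / r))
  else 1

/-- The `ℓ_p` norm of a vector in `ℝⁿ` (for finite `p`). -/
noncomputable def lpNorm (p : ℝ) {n : ℕ} (x : Fin n → ℝ) : ℝ :=
  (∑ i, |x i| ^ p) ^ (1 / p)

/-- The `ℓ_∞` norm of a vector in `ℝⁿ`. -/
noncomputable def linfNorm {n : ℕ} (x : Fin n → ℝ) : ℝ :=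
  ⨆ i, |x i|

/-- The norm of an `(m+1)`-linear form on `ℝᴺ × (ℝⁿ)^m` (encoded as a linear map into
`m`-multilinear maps): `sup{|T(x, y₁, …, y_m)| : ‖x‖_{ℓ_p} ≤ 1, ‖y_k‖_{ℓ_∞} ≤ 1}`. -/
noncomputable def multiOpNorm (p : ℝ) {N n m : ℕ}
    (T : (Fin N → ℝ) →ₗ[ℝ] MultilinearMap ℝ (fun _ : Fin m => (Fin n → ℝ)) ℝ) : ℝ :=
  sSup {c : ℝ | ∃ (x : Fin N → ℝ) (y : Fin m → (Fin n → ℝ)),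
    lpNorm p x ≤ 1 ∧ (∀ k, linfNorm (y k) ≤ 1) ∧ c = |T x y|}

/-!
Fixing the last `M - 1` slots at sign vectors, the duality of `ℓ_p` and `ℓ_r`, `r = p / (p - 1)`,
bounds the `ℓ_r` norm in the first slot by `‖T‖`. Khintchine's inequality with exponent `r` turns
each average over a sign vector into an `ℓ_2` sum at the cost of a factor `A_r`, and Minkowski's
inequality in `ℓ_{2 / r}` puts the sums in the required order.

Khintchine's inequality with the constants `A_r` follows Haagerup and Nazarov–Podkorytov. Let
`9 / 5 ≤ p < 2` and `Γ((p + 1) / 2) ≤ √π / 2`. As `|x| ^ p` is proportional to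
`∫₀^∞ (1 - cos (x t)) t ^ (-p - 1) dt`, the moment of `∑ ± aᵢ` is an integral of
`1 - ∏ cos (aᵢ t)`. If no `aᵢ ^ 2` exceeds half of `∑ aⱼ ^ 2`, the weighted AM-GM inequality
separates the factors, and it remains to see that the integrals of `1 - |cos t| ^ s` dominate those
of `1 - exp (-s t ^ 2 / 2)` for `s ≥ 2`. For `s = 2` this is the condition on `Γ`. Folding the half
line along the zeros of the cosine writes both integrals over the same measure on `(0, π / 2)`, and
there the two functions cross only once, which lets the comparison pass from `s = 2` to all larger
`s`. If one coefficient `a` is dominant, two of the others, `b` and `c`, are merged into `b + c` or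
`b - c`, and the induction runs with a lower bound that is convex in the sum of the squares of the
minor coefficients. Exponents below `p₀` follow from `p₀` by interpolation with the exponent `2`.
-/

open scoped BigOperators ENNReal

/-! ### The Gamma function near its minimum and the critical exponent -/

theorem Gamma_three_div_two_eq : Gamma (3 / 2) = √π / 2 := by
  rw [show (3 / 2 : ℝ) = 1 / 2 + 1 by norm_num, Gamma_add_one (by norm_num), Gamma_one_half_eq]
  ring

theorem lt_Gamma_three_div_two : (0.8862 : ℝ) < Gamma (3 / 2) := by
  have h : (1.7724 : ℝ) < √π := lt_sqrt_of_sq_lt (by linarith [pi_gt_d4])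
  rw [Gamma_three_div_two_eq]
  linarith

theorem Gamma_add_natCast_eq_prod_mul {s : ℝ} (hs : 0 < s) (n : ℕ) :
    Gamma (s + n) = (∏ j ∈ Finset.range n, (s + j)) * Gamma s := by
  induction n with
  | zero => simp
  | succ n ih =>
    rw [Nat.cast_succ, ← add_assoc, Gamma_add_one (by positivity), ih, Finset.prod_range_succ]
    ring

theorem Gamma_pow_add_le_mul_pow {s t x : ℝ} {k l : ℕ} (hs : 0 < s) (ht : 0 < t)
    (hk : 0 < k) (hl : 0 < l) (hx : (k + l) * x = k * s + l * t) :
    Gamma x ^ (k + l) ≤ Gamma s ^ k * Gamma t ^ l := by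
  have hx' : x = k / (k + l) * s + l / (k + l) * t := by field_simp; linarith
  have hconvex := Gamma_mul_add_mul_le_rpow_Gamma_mul_rpow_Gamma hs ht
    (a := k / (k + l)) (b := l / (k + l)) (by positivity) (by positivity) (by field_simp)
  rw [← hx'] at hconvex
  have hΓ : 0 ≤ Gamma x := (Gamma_pos_of_pos (by rw [hx']; positivity)).le
  have hexp : ∀ {c : ℝ} {j : ℕ}, 0 ≤ c → (c ^ (j / (k + l) : ℝ)) ^ (k + l) = c ^ j := by
    intro c j hc
    rw [← rpow_natCast, ← rpow_mul hc, Nat.cast_add, div_mul_cancel₀ _ (by positivity),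
      rpow_natCast]
  calc Gamma x ^ (k + l)
      ≤ (Gamma s ^ (k / (k + l) : ℝ) * Gamma t ^ (l / (k + l) : ℝ)) ^ (k + l) := by gcongr
    _ = Gamma s ^ k * Gamma t ^ l := by
        rw [mul_pow, hexp (Gamma_pos_of_pos hs).le, hexp (Gamma_pos_of_pos ht).le]

-- Log-convexity is nearly an equality far from the origin, so shifting by `n` before applying it
-- makes the resulting comparison of values near the minimum of `Γ` as sharp as needed.
theorem prod_mul_Gamma_pow_add_le {s t x : ℝ} {k l : ℕ} (n : ℕ) (hs : 0 < s) (ht : 0 < t)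
    (hx₀ : 0 < x) (hk : 0 < k) (hl : 0 < l) (hx : (k + l) * x = k * s + l * t) :
    ((∏ j ∈ Finset.range n, (x + j)) * Gamma x) ^ (k + l) ≤
      ((∏ j ∈ Finset.range n, (s + j)) * Gamma s) ^ k *
        ((∏ j ∈ Finset.range n, (t + j)) * Gamma t) ^ l := by
  simp only [← Gamma_add_natCast_eq_prod_mul, hs, ht, hx₀]
  exact Gamma_pow_add_le_mul_pow (by positivity) (by positivity) hk hl (by linear_combination hx)

theorem Gamma_three_div_two_lt_Gamma_seven_div_five : Gamma (3 / 2) < Gamma (7 / 5) := by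
  have hG := lt_Gamma_three_div_two
  have h := prod_mul_Gamma_pow_add_le 25 (s := 7 / 5) (t := 2) (x := 3 / 2) (k := 5) (l := 1)
    (by norm_num) (by norm_num) (by norm_num) (by norm_num) (by norm_num) (by norm_num)
  rw [Gamma_two, mul_one, pow_one, mul_pow, mul_pow] at h
  by_contra! hle
  set P := ∏ j ∈ Finset.range 25, (3 / 2 + j : ℝ) with hP
  set Q := ∏ j ∈ Finset.range 25, (7 / 5 + j : ℝ) with hQ
  set R := ∏ j ∈ Finset.range 25, (2 + j : ℝ) with hR
  have hnum : Q ^ 5 * R < P ^ 6 * 0.8862 := by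
    rw [hP, hQ, hR]
    norm_num [Finset.prod_range_succ]
  have : 0 < Gamma (7 / 5) := Gamma_pos_of_pos (by norm_num)
  refine h.not_gt ?_
  calc Q ^ 5 * Gamma (7 / 5) ^ 5 * R
      ≤ Q ^ 5 * Gamma (3 / 2) ^ 5 * R := by gcongr
    _ = Q ^ 5 * R * Gamma (3 / 2) ^ 5 := by ring
    _ < P ^ 6 * Gamma (3 / 2) * Gamma (3 / 2) ^ 5 :=
        mul_lt_mul_of_pos_right (hnum.trans_le (by gcongr)) (by positivity)
    _ = P ^ 6 * Gamma (3 / 2) ^ 6 := by ring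

theorem Gamma_twentynine_div_twenty_lt_Gamma_three_div_two :
    Gamma (29 / 20) < Gamma (3 / 2) := by
  have hG := lt_Gamma_three_div_two
  have h := prod_mul_Gamma_pow_add_le 25 (s := 3 / 2) (t := 1) (x := 29 / 20) (k := 9) (l := 1)
    (by norm_num) (by norm_num) (by norm_num) (by norm_num) (by norm_num) (by norm_num)
  rw [Gamma_one, mul_one, pow_one, mul_pow, mul_pow] at h
  by_contra! hle
  set P := ∏ j ∈ Finset.range 25, (29 / 20 + j : ℝ) with hP
  set Q := ∏ j ∈ Finset.range 25, (3 / 2 + j : ℝ) with hQ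
  set R := ∏ j ∈ Finset.range 25, (1 + j : ℝ) with hR
  have hnum : Q ^ 9 * R < P ^ 10 * 0.8862 := by
    rw [hP, hQ, hR]
    norm_num [Finset.prod_range_succ]
  refine h.not_gt ?_
  calc Q ^ 9 * Gamma (3 / 2) ^ 9 * R
      = Q ^ 9 * R * Gamma (3 / 2) ^ 9 := by ring
    _ < P ^ 10 * Gamma (3 / 2) * Gamma (3 / 2) ^ 9 :=
        mul_lt_mul_of_pos_right (hnum.trans_le (by gcongr)) (by positivity)
    _ = P ^ 10 * Gamma (3 / 2) ^ 10 := by ring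
    _ ≤ P ^ 10 * Gamma (29 / 20) ^ 10 := by gcongr

/-- The set of solutions of `Γ((p + 1) / 2) = √π / 2` in `(1, 2)`, whose infimum is
`khintchineP0`. -/
def khintchineP0Set : Set ℝ := {p | 1 < p ∧ p < 2 ∧ Gamma ((p + 1) / 2) = √π / 2}

theorem nine_fifths_le_of_mem_khintchineP0Set {p : ℝ} (hp : p ∈ khintchineP0Set) : 9 / 5 ≤ p := by
  obtain ⟨h₁, -, hΓ⟩ := hp
  by_contra! hlt
  have h := convexOn_Gamma.le_max_of_mem_Icc (x := (p + 1) / 2) (y := 3 / 2) (z := 7 / 5)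
    (Set.mem_Ioi.2 (by linarith)) (Set.mem_Ioi.2 (by norm_num)) ⟨by linarith, by norm_num⟩
  rw [hΓ, ← Gamma_three_div_two_eq, max_self] at h
  exact h.not_gt Gamma_three_div_two_lt_Gamma_seven_div_five

theorem continuousOn_Gamma_add_one_div_two {a b : ℝ} (ha : 0 < a) :
    ContinuousOn (fun p ↦ Gamma ((p + 1) / 2)) (Set.Icc a b) :=
  differentiableOn_Gamma_Ioi.continuousOn.comp (by fun_prop)
    fun p hp ↦ Set.mem_Ioi.2 (by linarith [hp.1])

theorem exists_mem_khintchineP0Set_le : ∃ p ∈ khintchineP0Set, p ≤ 19 / 10 := by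
  obtain ⟨p, hp, hΓ⟩ : √π / 2 ∈ (fun p ↦ Gamma ((p + 1) / 2)) '' Set.Icc (9 / 5) (19 / 10) := by
    refine intermediate_value_Icc' (by norm_num)
      (continuousOn_Gamma_add_one_div_two (by norm_num)) ⟨?_, ?_⟩ <;>
      rw [← Gamma_three_div_two_eq]
    · convert Gamma_twentynine_div_twenty_lt_Gamma_three_div_two.le using 2; norm_num
    · convert Gamma_three_div_two_lt_Gamma_seven_div_five.le using 2; norm_num
  exact ⟨p, ⟨by linarith [hp.1], by linarith [hp.2], hΓ⟩, hp.2⟩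

theorem closure_khintchineP0Set_subset :
    closure khintchineP0Set ⊆ Set.Icc (9 / 5) 2 ∩ (fun p ↦ Gamma ((p + 1) / 2)) ⁻¹' {√π / 2} :=
  closure_minimal
    (fun _ hp ↦ ⟨⟨nine_fifths_le_of_mem_khintchineP0Set hp, hp.2.1.le⟩, hp.2.2⟩)
    ((continuousOn_Gamma_add_one_div_two (by norm_num)).preimage_isClosed_of_isClosed
      isClosed_Icc isClosed_singleton)

theorem khintchineP0_mem_khintchineP0Set : khintchineP0 ∈ khintchineP0Set := by
  obtain ⟨p, hp, hp'⟩ := exists_mem_khintchineP0Set_le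
  have hbdd : BddBelow khintchineP0Set := ⟨9 / 5, fun _ ↦ nine_fifths_le_of_mem_khintchineP0Set⟩
  have hle : khintchineP0 ≤ p := csInf_le hbdd hp
  have hclosure : khintchineP0 ∈ closure khintchineP0Set := csInf_mem_closure ⟨p, hp⟩ hbdd
  obtain ⟨hge, hΓ⟩ := closure_khintchineP0Set_subset hclosure
  exact ⟨by linarith [hge.1], by linarith, hΓ⟩

theorem nine_fifths_le_khintchineP0 : 9 / 5 ≤ khintchineP0 :=
  nine_fifths_le_of_mem_khintchineP0Set khintchineP0_mem_khintchineP0Set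

theorem khintchineP0_lt_two : khintchineP0 < 2 :=
  khintchineP0_mem_khintchineP0Set.2.1

theorem Gamma_khintchineP0_add_one_div_two : Gamma ((khintchineP0 + 1) / 2) = √π / 2 :=
  khintchineP0_mem_khintchineP0Set.2.2

theorem Gamma_add_one_div_two_le_of_khintchineP0_le {r : ℝ} (h₁ : khintchineP0 ≤ r) (h₂ : r ≤ 2) :
    Gamma ((r + 1) / 2) ≤ √π / 2 := by
  have hp := nine_fifths_le_khintchineP0
  have h := convexOn_Gamma.le_max_of_mem_Icc (x := (khintchineP0 + 1) / 2) (y := 3 / 2)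
    (z := (r + 1) / 2) (Set.mem_Ioi.2 (by linarith)) (Set.mem_Ioi.2 (by norm_num))
    ⟨by linarith, by linarith⟩
  rwa [Gamma_khintchineP0_add_one_div_two, Gamma_three_div_two_eq, max_self] at h

/-! ### Averages over signs -/

/-- The average of `f (x + ∑ ± aᵢ)` over all choices of signs, the `aᵢ` being the entries of the
list: lists make it possible to reorder the `aᵢ` and to merge two of them. -/
noncomputable def signAvg : List ℝ → (ℝ → ℝ) → ℝ → ℝ
  | [], f, x => f x
  | a :: l, f, x => (signAvg l f (x + a) + signAvg l f (x - a)) / 2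

section SignAvg

variable (a b : ℝ) (l : List ℝ) (f g : ℝ → ℝ) (x : ℝ)

theorem signAvg_nil : signAvg [] f x = f x := rfl

theorem signAvg_cons :
    signAvg (a :: l) f x = (signAvg l f (x + a) + signAvg l f (x - a)) / 2 := rfl

theorem signAvg_neg_cons : signAvg (-a :: l) f x = signAvg (a :: l) f x := by
  rw [signAvg_cons, signAvg_cons, sub_neg_eq_add, ← sub_eq_add_neg, add_comm]

theorem signAvg_cons_cons :
    signAvg (a :: b :: l) f x =
      (signAvg ((a + b) :: l) f x + signAvg ((a - b) :: l) f x) / 2 := by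
  simp only [signAvg_cons]
  ring_nf

theorem signAvg_perm {l l' : List ℝ} (h : l.Perm l') : signAvg l f x = signAvg l' f x := by
  induction h generalizing x with
  | nil => rfl
  | cons a _ ih => simp only [signAvg_cons, ih]
  | swap a b l =>
    simp only [signAvg_cons]
    ring_nf
  | trans _ _ ih₁ ih₂ => rw [ih₁, ih₂]

theorem signAvg_add :
    signAvg l (fun y ↦ f y + g y) x = signAvg l f x + signAvg l g x := by
  induction l generalizing x with
  | nil => rfl
  | cons a l ih => simp only [signAvg_cons, ih]; ring

theorem signAvg_const_mul (c : ℝ) : signAvg l (fun y ↦ c * f y) x = c * signAvg l f x := by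
  induction l generalizing x with
  | nil => rfl
  | cons a l ih => simp only [signAvg_cons, ih]; ring

theorem signAvg_const (c : ℝ) : signAvg l (fun _ ↦ c) x = c := by
  induction l generalizing x with
  | nil => rfl
  | cons a l ih => simp only [signAvg_cons, ih]; ring

theorem signAvg_mono {f g : ℝ → ℝ} (h : ∀ y, f y ≤ g y) : signAvg l f x ≤ signAvg l g x := by
  induction l generalizing x with
  | nil => exact h x
  | cons a l ih => simp only [signAvg_cons]; linarith [ih (x + a), ih (x - a)]

theorem signAvg_cos (t : ℝ) :
    signAvg l (fun y ↦ cos (y * t)) x = cos (x * t) * (l.map fun a ↦ cos (a * t)).prod := by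
  induction l generalizing x with
  | nil => simp [signAvg_nil]
  | cons a l ih =>
    simp only [signAvg_cons, ih, List.map_cons, List.prod_cons, add_mul, sub_mul, cos_add, cos_sub]
    ring

end SignAvg

/-- The sum of the squares of the entries of a list. -/
def sqSum (l : List ℝ) : ℝ := (l.map (· ^ 2)).sum

theorem sqSum_nil : sqSum [] = 0 := rfl

theorem sqSum_cons (a : ℝ) (l : List ℝ) : sqSum (a :: l) = a ^ 2 + sqSum l := by
  simp [sqSum]

theorem sqSum_nonneg (l : List ℝ) : 0 ≤ sqSum l := by
  induction l with
  | nil => exact le_rfl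
  | cons a l ih => rw [sqSum_cons]; positivity

theorem sqSum_perm {l l' : List ℝ} (h : l.Perm l') : sqSum l = sqSum l' :=
  (h.map _).sum_eq

theorem signAvg_sq (l : List ℝ) (x : ℝ) :
    signAvg l (fun y ↦ y ^ 2) x = x ^ 2 + sqSum l := by
  induction l generalizing x with
  | nil => simp [signAvg_nil, sqSum_nil]
  | cons a l ih => simp only [signAvg_cons, ih, sqSum_cons]; ring

/-- The absolute moment `𝔼 |∑ ± aᵢ| ^ p` of a Rademacher sum, the `aᵢ` being the entries of `l`. -/
noncomputable def signMoment (p : ℝ) (l : List ℝ) : ℝ := signAvg l (fun y ↦ |y| ^ p) 0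

theorem signMoment_nonneg (p : ℝ) (l : List ℝ) : 0 ≤ signMoment p l :=
  (signAvg_const l 0 0).ge.trans (signAvg_mono l 0 fun y ↦ by positivity)

theorem signMoment_two (l : List ℝ) : signMoment 2 l = sqSum l := by
  simp [signMoment, signAvg_sq]

theorem signMoment_perm (p : ℝ) {l l' : List ℝ} (h : l.Perm l') :
    signMoment p l = signMoment p l' :=
  signAvg_perm _ _ h

theorem signMoment_singleton (p a : ℝ) : signMoment p [a] = |a| ^ p := by
  simp [signMoment, signAvg_cons, signAvg_nil]

theorem signMoment_pair (p a b : ℝ) :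
    signMoment p [a, b] = (|a + b| ^ p + |a - b| ^ p) / 2 := by
  rw [← signMoment_singleton, ← signMoment_singleton]
  exact signAvg_cons_cons a b [] _ 0

theorem signMoment_cons_cons_cons (p a b c : ℝ) (l : List ℝ) :
    signMoment p (a :: b :: c :: l) =
      (signMoment p (a :: (b + c) :: l) + signMoment p (a :: (b - c) :: l)) / 2 := by
  simp only [signMoment, signAvg_cons a, signAvg_cons_cons b]
  ring

theorem signMoment_cons_cons_neg (p a b c : ℝ) (l : List ℝ) :
    signMoment p (a :: b :: -c :: l) = signMoment p (a :: b :: c :: l) := by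
  simp only [signMoment, signAvg_cons a, signAvg_cons b, signAvg_neg_cons]

theorem rpow_add_rpow_le_two_mul {x y q : ℝ} (hx : 0 ≤ x) (hy : 0 ≤ y) (hq₀ : 0 ≤ q)
    (hq₁ : q ≤ 1) : x ^ q + y ^ q ≤ 2 * ((x + y) / 2) ^ q := by
  have hconcave := (concaveOn_rpow hq₀ hq₁).2
  have h := hconcave (Set.mem_Ici.2 hx) (Set.mem_Ici.2 hy) (a := 1 / 2) (b := 1 / 2)
    (by norm_num) (by norm_num) (by norm_num)
  simp only [smul_eq_mul, one_div_mul_eq_div, ← add_div] at h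
  linarith

theorem chord_le_rpow {y z w q : ℝ} (hy : 0 ≤ y) (hyw : y ≤ w) (hwz : w ≤ z) (hq₀ : 0 ≤ q)
    (hq₁ : q ≤ 1) : (z - w) * y ^ q + (w - y) * z ^ q ≤ (z - y) * w ^ q := by
  rcases hyw.eq_or_lt with rfl | hyw
  · simp
  rcases hwz.eq_or_lt with rfl | hwz
  · simp
  have h := (concaveOn_rpow hq₀ hq₁).neg.secant_mono_aux1 (Set.mem_Ici.2 hy)
    (Set.mem_Ici.2 (by linarith)) hyw hwz
  simp only [Pi.neg_apply] at h
  linarith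

/-- The replacement for `(u + x) ^ q` in the lower bound for the moment of a Rademacher sum that has
a dominant coefficient of square `u`, the squares of the others having sum `x ≤ u`. As a function of
`x` it is convex, and its graph is the reflection of that of `x ↦ (u + x) ^ q` in the point
`(u, (2 * u) ^ q)`. -/
noncomputable def dominantBound (q u x : ℝ) : ℝ := 2 * (2 * u) ^ q - (3 * u - x) ^ q

theorem rpow_add_le_dominantBound {q u x : ℝ} (hq₀ : 0 ≤ q) (hq₁ : q ≤ 1) (hu : 0 ≤ u)
    (hx : 0 ≤ x) (hxu : x ≤ u) : (u + x) ^ q ≤ dominantBound q u x := by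
  have h := rpow_add_rpow_le_two_mul (x := u + x) (y := 3 * u - x) (by linarith) (by linarith)
    hq₀ hq₁
  rw [show (u + x + (3 * u - x)) / 2 = 2 * u by ring] at h
  rw [dominantBound]
  linarith

theorem dominantBound_nonneg {q u x : ℝ} (hq₀ : 0 ≤ q) (hq₁ : q ≤ 1) (hx : 0 ≤ x) (hxu : x ≤ u) :
    0 ≤ dominantBound q u x :=
  (rpow_nonneg (by linarith) q).trans
    (rpow_add_le_dominantBound hq₀ hq₁ (hx.trans hxu) hx hxu)

theorem two_mul_dominantBound_le_add {q u x d : ℝ} (hq₀ : 0 ≤ q) (hq₁ : q ≤ 1) (hd : 0 ≤ d)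
    (hdx : d ≤ x) (h : x + d ≤ u) :
    2 * dominantBound q u x ≤ dominantBound q u (x + d) + dominantBound q u (x - d) := by
  have h := rpow_add_rpow_le_two_mul (x := 3 * u - (x + d)) (y := 3 * u - (x - d)) (by linarith)
    (by linarith) hq₀ hq₁
  rw [show (3 * u - (x + d) + (3 * u - (x - d))) / 2 = 3 * u - x by ring] at h
  simp only [dominantBound]
  linarith

theorem two_mul_dominantBound_le_rpow_add {q u x d : ℝ} (hq₀ : 0 ≤ q) (hq₁ : q ≤ 1) (hu : 0 ≤ u)
    (hxu : x ≤ u) (h : u < x + d) :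
    2 * dominantBound q u x ≤ (u + (x + d)) ^ q + dominantBound q u (x - d) := by
  have h₁ := chord_le_rpow (y := 2 * u) (z := 3 * u - (x - d)) (w := u + (x + d)) (q := q)
    (by linarith) (by linarith) (by linarith) hq₀ hq₁
  have h₂ := chord_le_rpow (y := 2 * u) (z := 3 * u - (x - d)) (w := 3 * u - x) (q := q)
    (by linarith) (by linarith) (by linarith) hq₀ hq₁
  have hpos : 0 < u - x + d := by linarith
  refine le_of_mul_le_mul_left ?_ hpos
  simp only [dominantBound]
  linarith

/-! ### Reduction to flat coefficients -/

theorem self_add_mul_log_le_rpow {y q : ℝ} (hy : 0 ≤ y) (hq : q ≠ 0) :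
    y + (q - 1) * (y * log y) ≤ y ^ q := by
  rcases hy.eq_or_lt with rfl | hy
  · simp [zero_rpow hq]
  calc y + (q - 1) * (y * log y) = y * ((q - 1) * log y + 1) := by ring
    _ ≤ y * exp ((q - 1) * log y) := by gcongr; exact add_one_le_exp _
    _ = y ^ q := by
      rw [mul_comm (q - 1), ← rpow_def_of_pos hy, rpow_sub_one hy.ne', mul_div_cancel₀ _ hy.ne']

theorem log_le_two_mul_sub_one_div {y : ℝ} (hy₀ : 0 < y) (hy₁ : y ≤ 1) :
    log y ≤ 2 * (y - 1) / (y + 1) := by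
  have h := le_log_one_add_of_nonneg (sub_nonneg.2 ((one_le_inv₀ hy₀).2 hy₁))
  rw [add_sub_cancel, log_inv] at h
  have e : 2 * (y⁻¹ - 1) / (y⁻¹ - 1 + 2) = -(2 * (y - 1) / (y + 1)) := by
    rw [show y⁻¹ - 1 + 2 = (y + 1) / y by field_simp; ring]
    field_simp
    ring
  linarith

theorem mul_log_le_sq_sub_one_div_two {d : ℝ} (hd : 1 ≤ d) : d * log d ≤ (d ^ 2 - 1) / 2 := by
  have hd₀ : 0 < d := by linarith
  have h : log d ≤ (d - d⁻¹) / 2 := by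
    rw [← sinh_log hd₀]
    exact self_le_sinh_iff.2 (log_nonneg hd)
  calc d * log d ≤ d * ((d - d⁻¹) / 2) := by gcongr
    _ = (d ^ 2 - 1) / 2 := by field_simp

theorem sq_mul_log_sq_le {t : ℝ} (ht : t ^ 2 ≤ 1) :
    ((1 + t) / 2) ^ 2 * log (((1 + t) / 2) ^ 2) ≤ -((1 - t ^ 2) * ((1 + t) / (3 + t))) := by
  obtain ⟨ht₀, ht₁⟩ := abs_le.1 ((sq_le_one_iff_abs_le_one t).1 ht)
  rcases ht₀.eq_or_lt with rfl | ht₀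
  · simp
  have h₀ : 0 < (1 + t) / 2 := by linarith
  have h₃ : 0 < 3 + t := by linarith
  calc ((1 + t) / 2) ^ 2 * log (((1 + t) / 2) ^ 2)
      = ((1 + t) / 2) ^ 2 * (2 * log ((1 + t) / 2)) := by rw [log_pow, Nat.cast_ofNat]
    _ ≤ ((1 + t) / 2) ^ 2 * (2 * (2 * ((1 + t) / 2 - 1) / ((1 + t) / 2 + 1))) := by
      gcongr
      exact log_le_two_mul_sub_one_div h₀ (by linarith)
    _ = _ := by
      rw [show (1 + t) / 2 + 1 = (3 + t) / 2 by ring]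
      field_simp
      ring

theorem sum_mul_log_nonpos {t : ℝ} (ht : t ^ 2 ≤ 1) :
    ((1 + t) / 2) ^ 2 * log (((1 + t) / 2) ^ 2) + ((1 - t) / 2) ^ 2 * log (((1 - t) / 2) ^ 2) +
      (3 - t ^ 2) / 2 * log ((3 - t ^ 2) / 2) ≤ 0 := by
  obtain ⟨ht₀, ht₁⟩ := abs_le.1 ((sq_le_one_iff_abs_le_one t).1 ht)
  have h_pos := sq_mul_log_sq_le ht
  have h_neg := sq_mul_log_sq_le (t := -t) (by rwa [neg_sq])
  rw [neg_sq, ← sub_eq_add_neg, ← sub_eq_add_neg] at h_neg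
  have h_mid := mul_log_le_sq_sub_one_div_two (d := (3 - t ^ 2) / 2) (by linarith)
  have e : (1 - t ^ 2) * ((1 + t) / (3 + t)) + (1 - t ^ 2) * ((1 - t) / (3 - t)) -
      (((3 - t ^ 2) / 2) ^ 2 - 1) / 2 =
        (1 - t ^ 2) ^ 2 * (t ^ 2 + 3) / (8 * ((3 + t) * (3 - t))) := by
    have : 3 + t ≠ 0 := by linarith
    have : 3 - t ≠ 0 := by linarith
    field_simp
    ring
  have h : 0 ≤ (1 - t ^ 2) ^ 2 * (t ^ 2 + 3) / (8 * ((3 + t) * (3 - t))) := by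
    have : 0 ≤ 3 + t := by linarith
    have : 0 ≤ 3 - t := by linarith
    positivity
  linarith

-- The two sides agree at `q = 1`, and the tangents there of the three convex functions of `q` have
-- a sum of nonpositive slope.
theorem two_le_rpow_add_rpow_add_rpow {t q : ℝ} (ht : t ^ 2 ≤ 1) (hq₀ : 0 < q) (hq₁ : q ≤ 1) :
    2 ≤ (((1 + t) / 2) ^ 2) ^ q + (((1 - t) / 2) ^ 2) ^ q + ((3 - t ^ 2) / 2) ^ q := by
  have h₁ := self_add_mul_log_le_rpow (sq_nonneg ((1 + t) / 2)) hq₀.ne'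
  have h₂ := self_add_mul_log_le_rpow (sq_nonneg ((1 - t) / 2)) hq₀.ne'
  have h₃ := self_add_mul_log_le_rpow (y := (3 - t ^ 2) / 2) (by linarith) hq₀.ne'
  have h₄ := mul_nonneg_of_nonpos_of_nonpos (sub_nonpos.2 hq₁) (sum_mul_log_nonpos ht)
  linarith

theorem abs_rpow_two_mul (x q : ℝ) : |x| ^ (2 * q) = (x ^ 2) ^ q := by
  rw [rpow_mul (abs_nonneg x), rpow_two, sq_abs]

theorem two_rpow_mul_dominantBound_le_signMoment_pair {a b q : ℝ} (hb : b ^ 2 ≤ a ^ 2)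
    (hq₀ : 0 < q) (hq₁ : q ≤ 1) :
    2 ^ (q - 1) * dominantBound q (a ^ 2) (b ^ 2) ≤ signMoment (2 * q) [a, b] := by
  rw [signMoment_pair, abs_rpow_two_mul, abs_rpow_two_mul]
  rcases eq_or_ne a 0 with rfl | ha
  · obtain rfl : b = 0 := by simpa using hb
    simp [dominantBound, zero_rpow hq₀.ne']
  obtain ⟨t, rfl⟩ : ∃ t, b = a * t := ⟨b / a, by field_simp⟩
  have ha₂ : 0 < a ^ 2 := by positivity
  have ht : t ^ 2 ≤ 1 := by rwa [mul_pow, mul_le_iff_le_one_right ha₂] at hb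
  have e_add : ((a + a * t) ^ 2) ^ q = 2 ^ q * (2 * a ^ 2) ^ q * (((1 + t) / 2) ^ 2) ^ q := by
    rw [← mul_rpow, ← mul_rpow] <;> first | positivity | ring_nf
  have e_sub : ((a - a * t) ^ 2) ^ q = 2 ^ q * (2 * a ^ 2) ^ q * (((1 - t) / 2) ^ 2) ^ q := by
    rw [← mul_rpow, ← mul_rpow] <;> first | positivity | ring_nf
  have e_dom : (3 * a ^ 2 - (a * t) ^ 2) ^ q = (2 * a ^ 2) ^ q * ((3 - t ^ 2) / 2) ^ q := by
    rw [← mul_rpow (by positivity) (by linarith)]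
    ring_nf
  have h := mul_le_mul_of_nonneg_left (two_le_rpow_add_rpow_add_rpow ht hq₀ hq₁)
    (by positivity : 0 ≤ (2 : ℝ) ^ q * (2 * a ^ 2) ^ q)
  rw [dominantBound, e_add, e_sub, e_dom, rpow_sub_one two_ne_zero]
  linarith

section Dominant

variable {q C : ℝ} (hq₀ : 0 < q) (hq₁ : q ≤ 1) (hC₀ : 0 ≤ C)
include hq₀ hq₁

theorem mul_dominantBound_le_signMoment_pair (hC₁ : C ≤ 2 ^ (q - 1)) {a b : ℝ}
    (hb : b ^ 2 ≤ a ^ 2) :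
    C * dominantBound q (a ^ 2) (b ^ 2) ≤ signMoment (2 * q) [a, b] :=
  (mul_le_mul_of_nonneg_right hC₁ (dominantBound_nonneg hq₀.le hq₁ (sq_nonneg b) hb)).trans
    (two_rpow_mul_dominantBound_le_signMoment_pair hb hq₀ hq₁)

include hC₀

-- Both sides are averages: the right one over the merged coefficients `b + c` and `b - c`, for
-- which the squares of the minor coefficients sum to `sqSum (b :: c :: l) ± 2 * b * c`.
theorem mul_dominantBound_le_signMoment_cons_cons_cons {a b c : ℝ} {l : List ℝ}
    (h : sqSum (b :: c :: l) ≤ a ^ 2)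
    (hdom : ∀ x, sqSum (x :: l) ≤ a ^ 2 →
      C * dominantBound q (a ^ 2) (sqSum (x :: l)) ≤ signMoment (2 * q) (a :: x :: l))
    (hsq : ∀ x, C * sqSum (a :: x :: l) ^ q ≤ signMoment (2 * q) (a :: x :: l)) :
    C * dominantBound q (a ^ 2) (sqSum (b :: c :: l)) ≤ signMoment (2 * q) (a :: b :: c :: l) := by
  wlog hbc : 0 ≤ b * c generalizing c
  · have e : sqSum (b :: -c :: l) = sqSum (b :: c :: l) := by simp only [sqSum_cons, neg_sq]
    rw [← signMoment_cons_cons_neg, ← e]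
    exact this (e.trans_le h) (by linarith)
  have e_add : sqSum ((b + c) :: l) = sqSum (b :: c :: l) + 2 * (b * c) := by
    simp only [sqSum_cons]; ring
  have e_sub : sqSum ((b - c) :: l) = sqSum (b :: c :: l) - 2 * (b * c) := by
    simp only [sqSum_cons]; ring
  have h_sub := hdom (b - c) (by linarith)
  rw [e_sub] at h_sub
  rw [signMoment_cons_cons_cons]
  rcases le_or_gt (sqSum (b :: c :: l) + 2 * (b * c)) (a ^ 2) with hle | hlt
  · have h_add := hdom (b + c) (by linarith)
    rw [e_add] at h_add
    have h_mid := mul_le_mul_of_nonneg_left (two_mul_dominantBound_le_add hq₀.le hq₁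
      (by linarith) (by linarith [sqSum_nonneg ((b - c) :: l)]) hle) hC₀
    linarith
  · have h_add := hsq (b + c)
    rw [sqSum_cons, e_add] at h_add
    have h_mid := mul_le_mul_of_nonneg_left (two_mul_dominantBound_le_rpow_add hq₀.le hq₁
      (sq_nonneg a) h hlt) hC₀
    linarith

theorem mul_sqSum_rpow_le_signMoment_of_flat_of_dominant {l : List ℝ}
    (hflat : (∀ b ∈ l, 2 * b ^ 2 ≤ sqSum l) → C * sqSum l ^ q ≤ signMoment (2 * q) l)
    (hdom : ∀ b ∈ l, sqSum (l.erase b) ≤ b ^ 2 →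
      C * dominantBound q (b ^ 2) (sqSum (l.erase b)) ≤ signMoment (2 * q) (b :: l.erase b)) :
    C * sqSum l ^ q ≤ signMoment (2 * q) l := by
  by_cases h : ∀ b ∈ l, 2 * b ^ 2 ≤ sqSum l
  · exact hflat h
  push Not at h
  obtain ⟨b, hb, hlt⟩ := h
  have hperm := List.perm_cons_erase hb
  rw [sqSum_perm hperm, sqSum_cons] at hlt ⊢
  rw [signMoment_perm _ hperm]
  have hle : sqSum (l.erase b) ≤ b ^ 2 := by linarith
  refine le_trans ?_ (hdom b hb hle)
  gcongr
  exact rpow_add_le_dominantBound hq₀.le hq₁ (sq_nonneg b) (sqSum_nonneg _) hle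

theorem mul_dominantBound_le_signMoment (hC₁ : C ≤ 2 ^ (q - 1))
    (hflat : ∀ l, (∀ b ∈ l, 2 * b ^ 2 ≤ sqSum l) → C * sqSum l ^ q ≤ signMoment (2 * q) l) :
    ∀ (a : ℝ) (l : List ℝ), sqSum l ≤ a ^ 2 →
      C * dominantBound q (a ^ 2) (sqSum l) ≤ signMoment (2 * q) (a :: l)
  | a, [], _ => by
    simpa [sqSum_nil, signMoment_pair, signMoment_singleton] using
      mul_dominantBound_le_signMoment_pair hq₀ hq₁ hC₁ (b := 0) (a := a)
        (by simpa using sq_nonneg a)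
  | a, [b], h => by
    simp only [sqSum_cons, sqSum_nil, add_zero] at h ⊢
    exact mul_dominantBound_le_signMoment_pair hq₀ hq₁ hC₁ h
  | a, b :: c :: l, h =>
    mul_dominantBound_le_signMoment_cons_cons_cons hq₀ hq₁ hC₀ h
      (fun x hx ↦ mul_dominantBound_le_signMoment hC₁ hflat a (x :: l) hx)
      fun x ↦ mul_sqSum_rpow_le_signMoment_of_flat_of_dominant hq₀ hq₁ hC₀ (hflat _)
        fun y _ hle ↦ mul_dominantBound_le_signMoment hC₁ hflat y ((a :: x :: l).erase y) hle
termination_by _ l => l.length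
decreasing_by
  · simp
  · simp [List.length_erase_of_mem ‹y ∈ a :: x :: l›]

theorem mul_sqSum_rpow_le_signMoment_of_flat (hC₁ : C ≤ 2 ^ (q - 1))
    (hflat : ∀ l, (∀ b ∈ l, 2 * b ^ 2 ≤ sqSum l) → C * sqSum l ^ q ≤ signMoment (2 * q) l)
    (l : List ℝ) : C * sqSum l ^ q ≤ signMoment (2 * q) l :=
  mul_sqSum_rpow_le_signMoment_of_flat_of_dominant hq₀ hq₁ hC₀ (hflat l) fun b _ hle ↦
    mul_dominantBound_le_signMoment hq₀ hq₁ hC₀ hC₁ hflat b _ hle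

end Dominant

/-! ### The integral representation of the moments -/

/-- The integral `∫₀^∞ (1 - f t) t ^ (-p - 1) dt`. For `f = cos` its scaling in the argument of `f`
represents the powers `|a| ^ p`, and hence the moments of Rademacher sums and of the Gaussian. -/
noncomputable def defectIntegral (p : ℝ) (f : ℝ → ℝ) : ℝ :=
  ∫ t in Set.Ioi 0, (1 - f t) * t ^ (-p - 1)

theorem integrableOn_one_sub_mul_rpow {p C : ℝ} {f : ℝ → ℝ} (hp₀ : 0 < p) (hp₂ : p < 2)
    (hf : Measurable f) (hf₁ : ∀ t, |f t| ≤ 1) (hfC : ∀ t, 1 - f t ≤ C * t ^ 2) :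
    IntegrableOn (fun t ↦ (1 - f t) * t ^ (-p - 1)) (Set.Ioi 0) := by
  have hm : Measurable fun t : ℝ ↦ (1 - f t) * t ^ (-p - 1) := by fun_prop
  have hnorm : ∀ t : ℝ, 0 < t → ‖(1 - f t) * t ^ (-p - 1)‖ = (1 - f t) * t ^ (-p - 1) :=
    fun t ht ↦ norm_of_nonneg
      (mul_nonneg (sub_nonneg.2 (abs_le.1 (hf₁ t)).2) (rpow_nonneg ht.le _))
  rw [← Set.Ioc_union_Ioi_eq_Ioi zero_le_one]
  refine IntegrableOn.union ?_ ?_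
  · have hi : IntegrableOn (fun t : ℝ ↦ C * t ^ (1 - p)) (Set.Ioc 0 1) :=
      ((intervalIntegrable_iff_integrableOn_Ioc_of_le zero_le_one).1
        (intervalIntegral.intervalIntegrable_rpow' (by linarith))).const_mul C
    refine Integrable.mono' hi hm.aestronglyMeasurable ?_
    filter_upwards [ae_restrict_mem measurableSet_Ioc] with t ht
    rw [hnorm t ht.1]
    calc (1 - f t) * t ^ (-p - 1) ≤ C * t ^ 2 * t ^ (-p - 1) :=
          mul_le_mul_of_nonneg_right (hfC t) (rpow_nonneg ht.1.le _)
      _ = C * t ^ (1 - p) := by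
          rw [mul_assoc, ← rpow_two, ← rpow_add ht.1]
          ring_nf
  · have hi : IntegrableOn (fun t : ℝ ↦ 2 * t ^ (-p - 1)) (Set.Ioi 1) :=
      (integrableOn_Ioi_rpow_of_lt (by linarith) one_pos).const_mul 2
    refine Integrable.mono' hi hm.aestronglyMeasurable ?_
    filter_upwards [ae_restrict_mem measurableSet_Ioi] with t ht
    have ht₀ : 0 < t := one_pos.trans ht
    rw [hnorm t ht₀]
    exact mul_le_mul_of_nonneg_right (by linarith [abs_le.1 (hf₁ t)]) (rpow_nonneg ht₀.le _)

theorem defectIntegral_nonneg {p : ℝ} {f : ℝ → ℝ} (hf : ∀ t, f t ≤ 1) :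
    0 ≤ defectIntegral p f :=
  setIntegral_nonneg measurableSet_Ioi fun t ht ↦
    mul_nonneg (sub_nonneg.2 (hf t)) (rpow_nonneg (le_of_lt ht) _)

theorem ofReal_defectIntegral {p : ℝ} {f : ℝ → ℝ} (hf : ∀ t, f t ≤ 1)
    (hi : IntegrableOn (fun t ↦ (1 - f t) * t ^ (-p - 1)) (Set.Ioi 0)) :
    ENNReal.ofReal (defectIntegral p f) =
      ∫⁻ t in Set.Ioi 0, ENNReal.ofReal (1 - f t) * ENNReal.ofReal (t ^ (-p - 1)) := by
  rw [defectIntegral, ofReal_integral_eq_lintegral_ofReal hi]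
  · exact setLIntegral_congr_fun measurableSet_Ioi fun t _ ↦
      ENNReal.ofReal_mul (sub_nonneg.2 (hf t))
  · filter_upwards [ae_restrict_mem measurableSet_Ioi] with t ht
    exact mul_nonneg (sub_nonneg.2 (hf t)) (rpow_nonneg (le_of_lt ht) _)

theorem defectIntegral_comp_mul_of_pos (p : ℝ) (f : ℝ → ℝ) {a : ℝ} (ha : 0 < a) :
    defectIntegral p (fun t ↦ f (a * t)) = a ^ p * defectIntegral p f := by
  have h := integral_comp_mul_left_Ioi (fun t ↦ (1 - f t) * t ^ (-p - 1)) 0 ha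
  rw [mul_zero, smul_eq_mul] at h
  have e : ∫ t in Set.Ioi 0, (1 - f (a * t)) * (a * t) ^ (-p - 1) =
      a ^ (-p - 1) * defectIntegral p (fun t ↦ f (a * t)) := by
    rw [defectIntegral, ← integral_const_mul]
    refine setIntegral_congr_fun measurableSet_Ioi fun t ht ↦ ?_
    rw [mul_rpow ha.le (le_of_lt ht)]
    ring
  rw [e, ← defectIntegral, rpow_sub_one ha.ne', rpow_neg ha.le] at h
  field_simp at h
  linarith

theorem defectIntegral_comp_mul {p : ℝ} {f : ℝ → ℝ} (hp : p ≠ 0) (hf₀ : f 0 = 1)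
    (hf : Function.Even f) (a : ℝ) :
    defectIntegral p (fun t ↦ f (a * t)) = |a| ^ p * defectIntegral p f := by
  rcases lt_trichotomy a 0 with ha | rfl | ha
  · rw [abs_of_neg ha, ← defectIntegral_comp_mul_of_pos p f (neg_pos.2 ha)]
    simp only [neg_mul, hf _]
  · simp [defectIntegral, hf₀, zero_rpow hp]
  · rw [abs_of_pos ha, defectIntegral_comp_mul_of_pos p f ha]

theorem integrableOn_one_sub_cos_mul_rpow {p : ℝ} (hp₀ : 0 < p) (hp₂ : p < 2) (a : ℝ) :
    IntegrableOn (fun t ↦ (1 - cos (a * t)) * t ^ (-p - 1)) (Set.Ioi 0) :=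
  integrableOn_one_sub_mul_rpow (C := a ^ 2 / 2) hp₀ hp₂ (by fun_prop)
    (fun _ ↦ abs_cos_le_one _)
    fun t ↦ by linarith [one_sub_sq_div_two_le_cos (x := a * t)]

theorem defectIntegral_cos_pos {p : ℝ} (hp₀ : 0 < p) (hp₂ : p < 2) :
    0 < defectIntegral p cos := by
  have hi := integrableOn_one_sub_cos_mul_rpow hp₀ hp₂ 1
  simp only [one_mul] at hi
  have hnn : ∀ t ∈ Set.Ioi (0 : ℝ), 0 ≤ (1 - cos t) * t ^ (-p - 1) := fun t ht ↦
    mul_nonneg (sub_nonneg.2 (cos_le_one t)) (rpow_nonneg (le_of_lt ht) _)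
  refine (setIntegral_pos_iff_support_of_nonneg_ae
    ((ae_restrict_mem measurableSet_Ioi).mono hnn) hi).2 ?_
  refine lt_of_lt_of_le (by simp) (measure_mono (s := Set.Ioo 0 1) ?_)
  rintro t ⟨h₀, h₁⟩
  have hc : cos t < 1 := by
    rw [← cos_zero]
    exact cos_lt_cos_of_nonneg_of_le_pi le_rfl (by linarith [pi_gt_three]) h₀
  exact ⟨(mul_pos (sub_pos.2 hc) (rpow_pos_of_pos h₀ _)).ne', h₀⟩

theorem integrable_signAvg {α : Type*} [MeasurableSpace α] {μ : Measure α} {G : ℝ → α → ℝ}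
    (hG : ∀ y, Integrable (G y) μ) (l : List ℝ) (x : ℝ) :
    Integrable (fun t ↦ signAvg l (fun y ↦ G y t) x) μ := by
  induction l generalizing x with
  | nil => exact hG x
  | cons a l ih => exact ((ih _).add (ih _)).div_const 2

theorem signAvg_integral {α : Type*} [MeasurableSpace α] {μ : Measure α} {G : ℝ → α → ℝ}
    (hG : ∀ y, Integrable (G y) μ) (l : List ℝ) (x : ℝ) :
    signAvg l (fun y ↦ ∫ t, G y t ∂μ) x = ∫ t, signAvg l (fun y ↦ G y t) x ∂μ := by
  induction l generalizing x with
  | nil => rfl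
  | cons a l ih =>
    simp only [signAvg_cons]
    rw [integral_div, integral_add (integrable_signAvg hG l _) (integrable_signAvg hG l _),
      ih, ih]

theorem signAvg_one_sub_cos_mul (l : List ℝ) (t c : ℝ) :
    signAvg l (fun y ↦ (1 - cos (y * t)) * c) 0 =
      (1 - (l.map fun a ↦ cos (a * t)).prod) * c := by
  have e : (fun y ↦ (1 - cos (y * t)) * c) = fun y ↦ c + -c * cos (y * t) := by
    ext y
    ring
  rw [e, signAvg_add l (fun _ ↦ c), signAvg_const, signAvg_const_mul, signAvg_cos, zero_mul,
    cos_zero]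
  ring

theorem integrableOn_one_sub_prod_cos_mul_rpow {p : ℝ} (hp₀ : 0 < p) (hp₂ : p < 2)
    (l : List ℝ) :
    IntegrableOn (fun t ↦ (1 - (l.map fun a ↦ cos (a * t)).prod) * t ^ (-p - 1)) (Set.Ioi 0) := by
  have h := integrable_signAvg (integrableOn_one_sub_cos_mul_rpow hp₀ hp₂) l 0
  simp only [signAvg_one_sub_cos_mul] at h
  exact h

theorem defectIntegral_cos_mul {p : ℝ} (hp : p ≠ 0) (a : ℝ) :
    defectIntegral p (fun t ↦ cos (a * t)) = |a| ^ p * defectIntegral p cos :=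
  defectIntegral_comp_mul hp cos_zero cos_neg a

theorem defectIntegral_prod_cos {p : ℝ} (hp₀ : 0 < p) (hp₂ : p < 2) (l : List ℝ) :
    defectIntegral p (fun t ↦ (l.map fun a ↦ cos (a * t)).prod) =
      signMoment p l * defectIntegral p cos := by
  have h := signAvg_integral (integrableOn_one_sub_cos_mul_rpow hp₀ hp₂) l 0
  have e : ∀ y, ∫ t in Set.Ioi 0, (1 - cos (y * t)) * t ^ (-p - 1) =
      defectIntegral p cos * |y| ^ p :=
    fun y ↦ (defectIntegral_cos_mul hp₀.ne' y).trans (mul_comm _ _)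
  simp only [signAvg_one_sub_cos_mul, e] at h
  rw [mul_comm, signMoment, ← signAvg_const_mul, h]
  rfl

/-- The absolute moment `𝔼 |Z| ^ p` of a standard Gaussian `Z`. -/
noncomputable def gaussianMoment (p : ℝ) : ℝ :=
  ∫ x, |x| ^ p ∂ProbabilityTheory.gaussianReal 0 1

theorem gaussianMoment_eq {p : ℝ} (hp : -1 < p) :
    gaussianMoment p = 2 ^ (p / 2) * Gamma ((p + 1) / 2) / √π := by
  set g : ℝ → ℝ := fun y ↦ (√(2 * π))⁻¹ * (y ^ p * exp (-(1 / 2) * y ^ (2 : ℝ)))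
  have e : ∀ x : ℝ, ProbabilityTheory.gaussianPDFReal 0 1 x • |x| ^ p = g |x| := fun x ↦ by
    simp only [ProbabilityTheory.gaussianPDFReal, g, smul_eq_mul, sub_zero, NNReal.coe_one,
      mul_one, rpow_two, sq_abs]
    ring_nf
  have h₂ : (2 : ℝ) ^ (-(-(p + 1) / 2)) = 2 ^ (p / 2) * √2 := by
    rw [sqrt_eq_rpow, ← rpow_add two_pos]
    ring_nf
  rw [gaussianMoment, ProbabilityTheory.integral_gaussianReal_eq_integral_smul one_ne_zero]
  simp_rw [e]
  rw [integral_comp_abs, integral_const_mul,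
    integral_rpow_mul_exp_neg_mul_rpow two_pos hp one_half_pos, sqrt_mul two_pos.le, one_div,
    inv_rpow two_pos.le, ← rpow_neg two_pos.le, h₂]
  field_simp

theorem gaussianMoment_pos {p : ℝ} (hp : -1 < p) : 0 < gaussianMoment p := by
  have := Gamma_pos_of_pos (s := (p + 1) / 2) (by linarith)
  rw [gaussianMoment_eq hp]
  positivity

theorem integrable_abs_rpow_gaussianReal {p : ℝ} (hp : -1 < p) :
    Integrable (fun x ↦ |x| ^ p) (ProbabilityTheory.gaussianReal 0 1) :=
  not_imp_comm.1 integral_undef (gaussianMoment_pos hp).ne'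

theorem integral_cos_gaussianReal (t : ℝ) :
    ∫ x, cos (x * t) ∂ProbabilityTheory.gaussianReal 0 1 = exp (-(t ^ 2 / 2)) := by
  have h := congrArg Complex.re (ProbabilityTheory.charFun_gaussianReal (μ := 0) (v := 1) t)
  rw [charFun_apply_real, ← RCLike.re_to_complex, ← integral_re] at h
  · convert h using 1
    · refine integral_congr_ae (ae_of_all _ fun x ↦ ?_)
      simp only
      rw [← Complex.ofReal_mul, RCLike.re_to_complex, Complex.exp_ofReal_mul_I_re, mul_comm]
    · rw [← Complex.exp_ofReal_re]
      simp
  · refine (integrable_const (1 : ℝ)).mono' (by fun_prop) (ae_of_all _ fun x ↦ ?_)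
    rw [← Complex.ofReal_mul, Complex.norm_exp_ofReal_mul_I]

theorem integrable_one_sub_cos_mul_rpow_prod {p : ℝ} (hp₀ : 0 < p) (hp₂ : p < 2) :
    Integrable (fun z : ℝ × ℝ ↦ (1 - cos (z.1 * z.2)) * z.2 ^ (-p - 1))
      ((ProbabilityTheory.gaussianReal 0 1).prod (volume.restrict (Set.Ioi 0))) := by
  rw [integrable_prod_iff (Measurable.aestronglyMeasurable (by fun_prop))]
  refine ⟨ae_of_all _ fun x ↦ integrableOn_one_sub_cos_mul_rpow hp₀ hp₂ x, ?_⟩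
  have e : ∀ x : ℝ, ∫ t in Set.Ioi 0, ‖(1 - cos (x * t)) * t ^ (-p - 1)‖ =
      |x| ^ p * defectIntegral p cos := fun x ↦ by
    rw [← defectIntegral_cos_mul hp₀.ne']
    exact setIntegral_congr_fun measurableSet_Ioi fun t ht ↦ norm_of_nonneg
      (mul_nonneg (sub_nonneg.2 (cos_le_one _)) (rpow_nonneg (le_of_lt ht) _))
  simp only [e]
  exact (integrable_abs_rpow_gaussianReal (by linarith)).mul_const _

theorem defectIntegral_exp {p : ℝ} (hp₀ : 0 < p) (hp₂ : p < 2) :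
    defectIntegral p (fun t ↦ exp (-(t ^ 2 / 2))) =
      gaussianMoment p * defectIntegral p cos := by
  have h := integral_integral_swap (f := fun x t : ℝ ↦ (1 - cos (x * t)) * t ^ (-p - 1))
    (integrable_one_sub_cos_mul_rpow_prod hp₀ hp₂)
  have e : ∀ x, ∫ t in Set.Ioi 0, (1 - cos (x * t)) * t ^ (-p - 1) =
      |x| ^ p * defectIntegral p cos := defectIntegral_cos_mul hp₀.ne'
  simp only [e] at h
  rw [integral_mul_const, ← gaussianMoment] at h
  rw [h]
  refine integral_congr_ae (ae_of_all _ fun t ↦ ?_)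
  have hi : Integrable (fun x ↦ cos (x * t)) (ProbabilityTheory.gaussianReal 0 1) :=
    (integrable_const (1 : ℝ)).mono' (by fun_prop) (ae_of_all _ fun x ↦ abs_cos_le_one _)
  simp only
  rw [integral_mul_const, integral_sub (integrable_const _) hi, integral_cos_gaussianReal]
  simp

theorem defectIntegral_exp_mul {p s : ℝ} (hp₀ : 0 < p) (hp₂ : p < 2) (hs : 0 ≤ s) :
    defectIntegral p (fun t ↦ exp (-(s * t ^ 2 / 2))) =
      gaussianMoment p * defectIntegral p cos * s ^ (p / 2) := by
  have h := defectIntegral_comp_mul (f := fun t ↦ exp (-(t ^ 2 / 2))) hp₀.ne' (by simp)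
    (fun t ↦ by simp) √s
  have e : |√s| ^ p = s ^ (p / 2) := by
    rw [abs_of_nonneg (sqrt_nonneg s), sqrt_eq_rpow, ← rpow_mul hs]
    ring_nf
  simp only [mul_pow, sq_sqrt hs] at h
  rw [h, e, defectIntegral_exp hp₀ hp₂, mul_comm]

theorem integrableOn_one_sub_exp_mul_rpow {p s : ℝ} (hp₀ : 0 < p) (hp₂ : p < 2) (hs : 0 ≤ s) :
    IntegrableOn (fun t ↦ (1 - exp (-(s * t ^ 2 / 2))) * t ^ (-p - 1)) (Set.Ioi 0) := by
  refine integrableOn_one_sub_mul_rpow (C := s / 2) hp₀ hp₂ (by fun_prop) (fun t ↦ ?_) fun t ↦ ?_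
  · rw [abs_exp, exp_le_one_iff, neg_nonpos]
    positivity
  · linarith [add_one_le_exp (-(s * t ^ 2 / 2))]

theorem abs_cos_rpow_le_one {s : ℝ} (hs : 0 ≤ s) (t : ℝ) : |cos t| ^ s ≤ 1 :=
  rpow_le_one (abs_nonneg _) (abs_cos_le_one t) hs

theorem one_sub_abs_cos_rpow_le {s : ℝ} (hs : 2 ≤ s) (t : ℝ) :
    1 - |cos t| ^ s ≤ s / 2 * t ^ 2 := by
  have h := one_add_mul_self_le_rpow_one_add (s := -sin t ^ 2)
    (by linarith [sin_sq_le_one t]) (p := s / 2) (by linarith)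
  have e : |cos t| ^ s = (1 + -sin t ^ 2) ^ (s / 2) := by
    rw [← sub_eq_add_neg, ← cos_sq', ← abs_rpow_two_mul, mul_div_cancel₀ s two_ne_zero]
  have hsin : s / 2 * sin t ^ 2 ≤ s / 2 * t ^ 2 :=
    mul_le_mul_of_nonneg_left sin_sq_le_sq (by linarith)
  linarith

theorem integrableOn_one_sub_abs_cos_rpow_mul_rpow {p s : ℝ} (hp₀ : 0 < p) (hp₂ : p < 2)
    (hs : 2 ≤ s) (a : ℝ) :
    IntegrableOn (fun t ↦ (1 - |cos (a * t)| ^ s) * t ^ (-p - 1)) (Set.Ioi 0) := by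
  refine integrableOn_one_sub_mul_rpow (C := s / 2 * a ^ 2) hp₀ hp₂ (by fun_prop) (fun t ↦ ?_)
    fun t ↦ ?_
  · rw [abs_of_nonneg (rpow_nonneg (abs_nonneg _) s)]
    exact abs_cos_rpow_le_one (by linarith) _
  · linarith [one_sub_abs_cos_rpow_le hs (a * t)]

theorem defectIntegral_abs_cos_sq {p : ℝ} (hp₀ : 0 < p) (hp₂ : p < 2) :
    defectIntegral p (fun t ↦ |cos t| ^ (2 : ℝ)) = 2 ^ (p - 1) * defectIntegral p cos := by
  have h := defectIntegral_prod_cos hp₀ hp₂ [1, 1]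
  rw [signMoment_pair, sub_self, abs_zero, zero_rpow hp₀.ne', add_zero, one_add_one_eq_two,
    abs_of_pos two_pos, ← rpow_sub_one two_ne_zero] at h
  rw [← h]
  simp [← sq]

theorem sum_mul_one_sub_abs_rpow_inv_le_one_sub_prod {ι : Type*} [Fintype ι] {w y : ι → ℝ}
    (hw₀ : ∀ i, 0 ≤ w i) (hw₁ : ∑ i, w i = 1) (hy : ∀ i, |y i| ≤ 1) :
    ∑ i, w i * (1 - |y i| ^ (w i)⁻¹) ≤ 1 - ∏ i, y i := by
  have h : ∏ i, |y i| ≤ ∑ i, w i * |y i| ^ (w i)⁻¹ := by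
    refine le_trans ?_ (geom_mean_le_arith_mean_weighted Finset.univ w (fun i ↦ |y i| ^ (w i)⁻¹)
      (fun i _ ↦ hw₀ i) hw₁ fun i _ ↦ by positivity)
    refine Finset.prod_le_prod (fun i _ ↦ abs_nonneg _) fun i _ ↦ ?_
    rcases eq_or_ne (w i) 0 with h | h
    · simp [h, hy i]
    · rw [← rpow_mul (abs_nonneg _), inv_mul_cancel₀ h, rpow_one]
  have h_abs := le_abs_self (∏ i, y i)
  rw [Finset.abs_prod] at h_abs
  simp_rw [mul_sub, mul_one]
  rw [Finset.sum_sub_distrib, hw₁]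
  linarith

theorem sum_mul_defectIntegral_le_defectIntegral_prod {ι : Type*} [Fintype ι] {p : ℝ} {w : ι → ℝ}
    (hw₀ : ∀ i, 0 ≤ w i) (hw₁ : ∑ i, w i = 1) {f : ι → ℝ → ℝ} (hf : ∀ i t, |f i t| ≤ 1)
    (hi : ∀ i, w i ≠ 0 →
      IntegrableOn (fun t ↦ (1 - |f i t| ^ (w i)⁻¹) * t ^ (-p - 1)) (Set.Ioi 0))
    (hprod : IntegrableOn (fun t ↦ (1 - ∏ i, f i t) * t ^ (-p - 1)) (Set.Ioi 0)) :
    ∑ i, w i * defectIntegral p (fun t ↦ |f i t| ^ (w i)⁻¹) ≤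
      defectIntegral p fun t ↦ ∏ i, f i t := by
  have hi' : ∀ i, IntegrableOn
      (fun t ↦ w i * ((1 - |f i t| ^ (w i)⁻¹) * t ^ (-p - 1))) (Set.Ioi 0) := fun i ↦ by
    by_cases h : w i = 0
    · simp [h]
    · exact (hi i h).const_mul _
  simp only [defectIntegral, ← integral_const_mul]
  rw [← integral_finsetSum _ fun i _ ↦ hi' i]
  refine setIntegral_mono_on (integrable_finsetSum _ fun i _ ↦ hi' i) hprod measurableSet_Ioi
    fun t ht ↦ ?_
  simp only [← mul_assoc]
  rw [← Finset.sum_mul]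
  exact mul_le_mul_of_nonneg_right
    (sum_mul_one_sub_abs_rpow_inv_le_one_sub_prod hw₀ hw₁ fun i ↦ hf i t)
    (rpow_nonneg (le_of_lt ht) _)

theorem mul_rpow_le_defectIntegral_abs_cos_mul {p K : ℝ} (hp : p ≠ 0)
    (hK : ∀ s, 2 ≤ s → K * s ^ (p / 2) ≤ defectIntegral p fun t ↦ |cos t| ^ s) {a S : ℝ}
    (ha : a ≠ 0) (haS : 2 * a ^ 2 ≤ S) :
    K * S ^ (p / 2) ≤ defectIntegral p fun t ↦ |cos (a * t)| ^ (a ^ 2 / S)⁻¹ := by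
  have ha₂ : 0 < a ^ 2 := by positivity
  obtain ⟨s, rfl⟩ : ∃ s, S = a ^ 2 * s := ⟨S / a ^ 2, by field_simp⟩
  have hs : 2 ≤ s := by rwa [mul_comm, mul_le_mul_iff_right₀ ha₂] at haS
  rw [show (a ^ 2 / (a ^ 2 * s))⁻¹ = s by field_simp,
    defectIntegral_comp_mul (f := fun t ↦ |cos t| ^ s) hp (by simp) (fun t ↦ by simp),
    mul_rpow ha₂.le (by linarith), ← abs_rpow_two_mul, mul_div_cancel₀ p two_ne_zero,
    mul_left_comm]
  exact mul_le_mul_of_nonneg_left (hK s hs) (by positivity)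

theorem mul_rpow_le_defectIntegral_prod_cos {ι : Type*} [Fintype ι] {p K S : ℝ} (hp₀ : 0 < p)
    (hp₂ : p < 2) (hK : ∀ s, 2 ≤ s → K * s ^ (p / 2) ≤ defectIntegral p fun t ↦ |cos t| ^ s)
    {a : ι → ℝ} (hS : 0 < S) (haS : ∑ i, a i ^ 2 = S) (ha : ∀ i, 2 * a i ^ 2 ≤ S)
    (h_int : IntegrableOn (fun t ↦ (1 - ∏ i, cos (a i * t)) * t ^ (-p - 1)) (Set.Ioi 0)) :
    K * S ^ (p / 2) ≤ defectIntegral p fun t ↦ ∏ i, cos (a i * t) := by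
  have hw₀ : ∀ i, 0 ≤ a i ^ 2 / S := fun i ↦ by positivity
  have hw₁ : ∑ i, a i ^ 2 / S = 1 := by rw [← Finset.sum_div, haS, div_self hS.ne']
  have hne : ∀ i, a i ^ 2 / S ≠ 0 → a i ≠ 0 := fun i hi h ↦ hi (by simp [h])
  have hinv : ∀ i, a i ^ 2 / S ≠ 0 → 2 ≤ (a i ^ 2 / S)⁻¹ := fun i hi ↦ by
    rw [inv_div, le_div_iff₀ (sq_pos_of_ne_zero (hne i hi))]
    exact ha i
  calc K * S ^ (p / 2) = ∑ i, a i ^ 2 / S * (K * S ^ (p / 2)) := by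
        rw [← Finset.sum_mul, hw₁, one_mul]
    _ ≤ ∑ i, a i ^ 2 / S * defectIntegral p (fun t ↦ |cos (a i * t)| ^ (a i ^ 2 / S)⁻¹) := by
        refine Finset.sum_le_sum fun i _ ↦ ?_
        by_cases hi : a i ^ 2 / S = 0
        · simp [hi]
        · exact mul_le_mul_of_nonneg_left
            (mul_rpow_le_defectIntegral_abs_cos_mul hp₀.ne' hK (hne i hi) (ha i)) (hw₀ i)
    _ ≤ _ := sum_mul_defectIntegral_le_defectIntegral_prod hw₀ hw₁ (fun _ _ ↦ abs_cos_le_one _)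
        (fun i hi ↦ integrableOn_one_sub_abs_cos_rpow_mul_rpow hp₀ hp₂ (hinv i hi) _) h_int

theorem mul_sqSum_rpow_le_signMoment_mul_of_flat {p K : ℝ} (hp₀ : 0 < p) (hp₂ : p < 2)
    (hK : ∀ s, 2 ≤ s → K * s ^ (p / 2) ≤ defectIntegral p fun t ↦ |cos t| ^ s) {l : List ℝ}
    (hl : ∀ b ∈ l, 2 * b ^ 2 ≤ sqSum l) :
    K * sqSum l ^ (p / 2) ≤ signMoment p l * defectIntegral p cos := by
  rcases (sqSum_nonneg l).eq_or_lt with h₀ | h₀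
  · rw [← h₀, zero_rpow (by linarith), mul_zero]
    exact mul_nonneg (signMoment_nonneg p l) (defectIntegral_nonneg cos_le_one)
  have hprod : ∀ t, (l.map fun a ↦ cos (a * t)).prod = ∏ i, cos (l.get i * t) :=
    fun t ↦ (Fin.prod_univ_fun_getElem l fun a ↦ cos (a * t)).symm
  have h_int := integrableOn_one_sub_prod_cos_mul_rpow hp₀ hp₂ l
  rw [← defectIntegral_prod_cos hp₀ hp₂]
  simp only [hprod] at h_int ⊢
  exact mul_rpow_le_defectIntegral_prod_cos hp₀ hp₂ hK h₀ (Fin.sum_univ_fun_getElem l (· ^ 2))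
    (fun i ↦ hl _ (List.get_mem l i)) h_int

/-! ### Bounds for the tangent and the logarithm of the cosine -/

theorem nonneg_of_hasDerivAt_nonneg {f f' : ℝ → ℝ} {a b : ℝ} (hab : a ≤ b) (ha : 0 ≤ f a)
    (hf : ∀ x ∈ Set.Icc a b, HasDerivAt f (f' x) x) (hf' : ∀ x ∈ Set.Ioo a b, 0 ≤ f' x) :
    0 ≤ f b :=
  have hmono : MonotoneOn f (Set.Icc a b) :=
    monotoneOn_of_hasDerivWithinAt_nonneg (convex_Icc a b)
      (fun x hx ↦ (hf x hx).continuousAt.continuousWithinAt)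
      (fun x hx ↦ (hf x (interior_subset hx)).hasDerivWithinAt)
      fun x hx ↦ hf' x (interior_Icc.subset hx)
  ha.trans (hmono (Set.left_mem_Icc.2 hab) (Set.right_mem_Icc.2 hab) hab)

theorem cos_le_one_sub_sq_add_pow {x : ℝ} (hx : 0 ≤ x) :
    cos x ≤ 1 - x ^ 2 / 2 + x ^ 4 / 24 := by
  rw [← sub_nonneg]
  refine nonneg_of_hasDerivAt_nonneg (f := fun x ↦ 1 - x ^ 2 / 2 + x ^ 4 / 24 - cos x)
    (f' := fun x ↦ sin x - (x - x ^ 3 / 6)) hx (by simp) (fun y _ ↦ ?_) fun y hy ↦ ?_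
  · refine ((((hasDerivAt_const y (1 : ℝ)).sub ((hasDerivAt_pow 2 y).div_const 2)).add
      ((hasDerivAt_pow 4 y).div_const 24)).sub (hasDerivAt_cos y)).congr_deriv ?_
    push_cast
    ring
  · linarith [sin_ge_sub_cube hy.1.le]

theorem sin_le_sub_cube_add_pow {x : ℝ} (hx : 0 ≤ x) : sin x ≤ x - x ^ 3 / 6 + x ^ 5 / 120 := by
  rw [← sub_nonneg]
  refine nonneg_of_hasDerivAt_nonneg (f := fun x ↦ x - x ^ 3 / 6 + x ^ 5 / 120 - sin x)
    (f' := fun x ↦ 1 - x ^ 2 / 2 + x ^ 4 / 24 - cos x) hx (by simp) (fun y _ ↦ ?_) fun y hy ↦ ?_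
  · refine ((((hasDerivAt_id y).sub ((hasDerivAt_pow 3 y).div_const 6)).add
      ((hasDerivAt_pow 5 y).div_const 120)).sub (hasDerivAt_sin y)).congr_deriv ?_
    push_cast
    ring
  · linarith [cos_le_one_sub_sq_add_pow hy.1.le]

theorem one_sub_sq_add_pow_sub_pow_le_cos {x : ℝ} (hx : 0 ≤ x) :
    1 - x ^ 2 / 2 + x ^ 4 / 24 - x ^ 6 / 720 ≤ cos x := by
  rw [← sub_nonneg]
  refine nonneg_of_hasDerivAt_nonneg
    (f := fun x ↦ cos x - (1 - x ^ 2 / 2 + x ^ 4 / 24 - x ^ 6 / 720))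
    (f' := fun x ↦ x - x ^ 3 / 6 + x ^ 5 / 120 - sin x) hx (by simp) (fun y _ ↦ ?_) fun y hy ↦ ?_
  · refine ((hasDerivAt_cos y).sub ((((hasDerivAt_const y (1 : ℝ)).sub
      ((hasDerivAt_pow 2 y).div_const 2)).add ((hasDerivAt_pow 4 y).div_const 24)).sub
      ((hasDerivAt_pow 6 y).div_const 720))).congr_deriv ?_
    push_cast
    ring
  · linarith [sin_le_sub_cube_add_pow hy.1.le]

theorem mul_cos_le_sin {x : ℝ} (hx : 0 ≤ x) (hx' : x ≤ π) : x * cos x ≤ sin x := by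
  rw [← sub_nonneg]
  refine nonneg_of_hasDerivAt_nonneg (f := fun x ↦ sin x - x * cos x)
    (f' := fun x ↦ x * sin x) hx (by simp) (fun y _ ↦ ?_) fun y hy ↦ ?_
  · refine ((hasDerivAt_sin y).sub ((hasDerivAt_id y).mul (hasDerivAt_cos y))).congr_deriv ?_
    simp only [id]
    ring
  · exact mul_nonneg hy.1.le (sin_nonneg_of_nonneg_of_le_pi hy.1.le (hy.2.le.trans hx'))

theorem three_mul_mul_cos_le_mul_sin {x : ℝ} (hx : 0 ≤ x) (hx' : x ≤ π) :
    3 * x * cos x ≤ (3 - x ^ 2) * sin x := by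
  rw [← sub_nonneg]
  refine nonneg_of_hasDerivAt_nonneg (f := fun x ↦ (3 - x ^ 2) * sin x - 3 * x * cos x)
    (f' := fun x ↦ x * (sin x - x * cos x)) hx (by simp) (fun y _ ↦ ?_) fun y hy ↦ ?_
  · refine ((((hasDerivAt_const y (3 : ℝ)).sub (hasDerivAt_pow 2 y)).mul (hasDerivAt_sin y)).sub
      (((hasDerivAt_id y).const_mul 3).mul (hasDerivAt_cos y))).congr_deriv ?_
    simp
    ring
  · exact mul_nonneg hy.1.le (sub_nonneg.2 (mul_cos_le_sin hy.1.le (hy.2.le.trans hx')))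

-- This and the two previous bounds are the convergents of the continued fraction of `tan`.
theorem fifteen_mul_sub_cube_mul_cos_le_mul_sin {x : ℝ} (hx : 0 ≤ x) (hx' : x ≤ π) :
    (15 * x - x ^ 3) * cos x ≤ (15 - 6 * x ^ 2) * sin x := by
  rw [← sub_nonneg]
  refine nonneg_of_hasDerivAt_nonneg
    (f := fun x ↦ (15 - 6 * x ^ 2) * sin x - (15 * x - x ^ 3) * cos x)
    (f' := fun x ↦ x * ((3 - x ^ 2) * sin x - 3 * x * cos x)) hx (by simp)
    (fun y _ ↦ ?_) fun y hy ↦ ?_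
  · refine ((((hasDerivAt_const y (15 : ℝ)).sub ((hasDerivAt_pow 2 y).const_mul 6)).mul
      (hasDerivAt_sin y)).sub ((((hasDerivAt_id y).const_mul 15).sub (hasDerivAt_pow 3 y)).mul
      (hasDerivAt_cos y))).congr_deriv ?_
    simp
    ring
  · exact mul_nonneg hy.1.le
      (sub_nonneg.2 (three_mul_mul_cos_le_mul_sin hy.1.le (hy.2.le.trans hx')))

theorem cos_pos_of_nonneg_of_le_six_fifths {x : ℝ} (hx : 0 ≤ x) (hx' : x ≤ 6 / 5) : 0 < cos x :=
  cos_pos_of_mem_Ioo ⟨by linarith [pi_gt_three], by linarith [pi_gt_three]⟩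

-- `1 / (1 - 2 x ^ 2 / 5)` in the convergent `x (1 - x ^ 2 / 15) / (1 - 2 x ^ 2 / 5)` of `tan x`
-- is replaced by a partial geometric sum.
theorem mul_one_add_geom_sum_le_tan {x : ℝ} (hx : 0 ≤ x) (hx' : x ≤ 6 / 5) :
    x * (1 + x ^ 2 / 3 * (1 + (2 / 5 * x ^ 2) + (2 / 5 * x ^ 2) ^ 2 + (2 / 5 * x ^ 2) ^ 3 +
      (2 / 5 * x ^ 2) ^ 4)) ≤ tan x := by
  have hc := cos_pos_of_nonneg_of_le_six_fifths hx hx'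
  have h := fifteen_mul_sub_cube_mul_cos_le_mul_sin hx (by linarith [pi_gt_three])
  have hd : 0 < 15 - 6 * x ^ 2 := by linarith [pow_le_pow_left₀ hx hx' 2]
  rw [tan_eq_sin_div_cos, le_div_iff₀ hc]
  refine le_of_mul_le_mul_left (h.trans' ?_) hd
  obtain ⟨r, hr₀, hr⟩ : ∃ r, 0 ≤ r ∧ x ^ 2 = 5 / 2 * r := ⟨2 / 5 * x ^ 2, by positivity, by ring⟩
  have e : (15 - 6 * x ^ 2) * (x * (1 + x ^ 2 / 3 * (1 + (2 / 5 * x ^ 2) + (2 / 5 * x ^ 2) ^ 2 +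
        (2 / 5 * x ^ 2) ^ 3 + (2 / 5 * x ^ 2) ^ 4)) * cos x) =
      (15 * x - x ^ 3) * cos x - 5 * x ^ 3 * cos x * r ^ 5 := by
    rw [pow_succ' x 2, hr]
    ring
  have : 0 ≤ 5 * x ^ 3 * cos x * r ^ 5 := by positivity
  linarith

/-- The polynomial with `x ^ 2 * (1 + logCosPoly (x ^ 2)) ≤ -2 * log (cos x)` that results from
integrating `mul_one_add_geom_sum_le_tan`. -/
noncomputable def logCosPoly (t : ℝ) : ℝ :=
  t / 6 + 2 / 45 * t ^ 2 + t ^ 3 / 75 + 8 / 1875 * t ^ 4 + 8 / 5625 * t ^ 5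

theorem hasDerivAt_sq_mul_one_add_logCosPoly (x : ℝ) :
    HasDerivAt (fun x ↦ x ^ 2 * (1 + logCosPoly (x ^ 2)))
      (2 * (x * (1 + x ^ 2 / 3 * (1 + (2 / 5 * x ^ 2) + (2 / 5 * x ^ 2) ^ 2 +
        (2 / 5 * x ^ 2) ^ 3 + (2 / 5 * x ^ 2) ^ 4)))) x := by
  have e : (fun x ↦ x ^ 2 * (1 + logCosPoly (x ^ 2))) = fun x ↦ x ^ 2 + x ^ 4 / 6 +
      2 / 45 * x ^ 6 + x ^ 8 / 75 + 8 / 1875 * x ^ 10 + 8 / 5625 * x ^ 12 := by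
    ext x
    rw [logCosPoly]
    ring
  rw [e]
  refine ((((((hasDerivAt_pow 2 x).add ((hasDerivAt_pow 4 x).div_const 6)).add
    ((hasDerivAt_pow 6 x).const_mul (2 / 45))).add ((hasDerivAt_pow 8 x).div_const 75)).add
    ((hasDerivAt_pow 10 x).const_mul (8 / 1875))).add
    ((hasDerivAt_pow 12 x).const_mul (8 / 5625))).congr_deriv ?_
  push_cast
  ring

theorem hasDerivAt_neg_two_mul_log_cos {x : ℝ} (hx : cos x ≠ 0) :
    HasDerivAt (fun x ↦ -2 * log (cos x)) (2 * tan x) x := by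
  refine (((hasDerivAt_cos x).log hx).const_mul (-2)).congr_deriv ?_
  rw [tan_eq_sin_div_cos]
  ring

theorem sq_mul_one_add_logCosPoly_le {x : ℝ} (hx : 0 ≤ x) (hx' : x ≤ 6 / 5) :
    x ^ 2 * (1 + logCosPoly (x ^ 2)) ≤ -2 * log (cos x) := by
  rw [← sub_nonneg]
  refine nonneg_of_hasDerivAt_nonneg
    (f := fun x ↦ -2 * log (cos x) - x ^ 2 * (1 + logCosPoly (x ^ 2))) hx (by simp)
    (fun y hy ↦ (hasDerivAt_neg_two_mul_log_cos
      (cos_pos_of_nonneg_of_le_six_fifths hy.1 (hy.2.trans hx')).ne').sub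
      (hasDerivAt_sq_mul_one_add_logCosPoly y)) fun y hy ↦ ?_
  linarith [mul_one_add_geom_sum_le_tan hy.1.le (hy.2.le.trans hx')]

theorem lt_six_fifths_of_neg_two_mul_log_cos_lt {x : ℝ} (hx : x < π / 2)
    (hL : -2 * log (cos x) < 2) : x < 6 / 5 := by
  by_contra! h
  have h_poly := sq_mul_one_add_logCosPoly_le (x := 6 / 5) (by norm_num) le_rfl
  norm_num [logCosPoly] at h_poly
  have hc : 0 < cos x := cos_pos_of_mem_Ioo ⟨by linarith [pi_gt_three], hx⟩
  have h_log := log_le_log hc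
    (cos_le_cos_of_nonneg_of_le_pi (by norm_num) (by linarith [pi_gt_three]) h)
  linarith

theorem sinc_taylor_mul_lt_cos_taylor_mul {t : ℝ} (ht₀ : 0 < t) (ht₁ : t ≤ 36 / 25) :
    (1 + logCosPoly t / 10) * (1 - t / 6 + t ^ 2 / 120) <
      (1 + logCosPoly t) * (1 + 3 / 2 * logCosPoly t) *
        (1 - t / 2 + t ^ 2 / 24 - t ^ 3 / 720) := by
  have hpow : ∀ k : ℕ, t ^ k ≤ (36 / 25) ^ k := fun k ↦ pow_le_pow_left₀ ht₀.le ht₁ k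
  have hpos : 0 < 1 / 15 - 43 / 1800 * t - 151 / 27000 * t ^ 2 - 5227 / 2700000 * t ^ 3 -
      21419 / 32400000 * t ^ 4 - 699 / 500000 * t ^ 5 - 15953 / 121500000 * t ^ 6 -
      7067 / 168750000 * t ^ 7 - 11167 / 1012500000 * t ^ 8 - 581 / 189843750 * t ^ 9 -
      277 / 316406250 * t ^ 10 + 16 / 158203125 * t ^ 11 - 2 / 474609375 * t ^ 12 := by
    linarith [hpow 2, hpow 3, hpow 4, hpow 5, hpow 6, hpow 7, hpow 8, hpow 9, hpow 10, hpow 12,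
      pow_pos ht₀ 11]
  have := mul_pos ht₀ hpos
  simp only [logCosPoly]
  linarith

theorem one_add_div_ten_mul_lt_of_le {w z S C : ℝ} (hw : 0 ≤ w) (hz : w ≤ z) (hS : S ≤ 1)
    (hC : 1 / 5 ≤ C) (h : (1 + w / 10) * S < (1 + w) * (1 + 3 / 2 * w) * C) :
    (1 + z / 10) * S < (1 + z) * (1 + 3 / 2 * z) * C := by
  have hwz : 0 ≤ 3 / 2 * (z + w) * C :=
    mul_nonneg (mul_nonneg (by norm_num) (by linarith)) (by linarith)
  have := mul_nonneg (sub_nonneg.2 hz)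
    (show 0 ≤ (5 / 2 + 3 / 2 * (z + w)) * C - S / 10 by linarith)
  linarith

theorem one_add_div_ten_mul_tan_lt {x z : ℝ} (hx : 0 < x) (hx' : x ≤ 6 / 5)
    (hz : logCosPoly (x ^ 2) ≤ z) :
    (1 + z / 10) * tan x < x * ((1 + z) * (1 + 3 / 2 * z)) := by
  have ht₀ : 0 < x ^ 2 := by positivity
  have ht₁ : x ^ 2 ≤ 36 / 25 := (pow_le_pow_left₀ hx.le hx' 2).trans_eq (by norm_num)
  have hw : 0 ≤ logCosPoly (x ^ 2) := by
    rw [logCosPoly]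
    positivity
  have hz₀ : 0 ≤ z := hw.trans hz
  have hS : 1 - x ^ 2 / 6 + (x ^ 2) ^ 2 / 120 ≤ 1 := by nlinarith
  have hC : 1 / 5 ≤ 1 - x ^ 2 / 2 + (x ^ 2) ^ 2 / 24 - (x ^ 2) ^ 3 / 720 := by
    linarith [pow_le_pow_left₀ ht₀.le ht₁ 3, sq_nonneg (x ^ 2)]
  have h_poly := one_add_div_ten_mul_lt_of_le hw hz hS hC
    (sinc_taylor_mul_lt_cos_taylor_mul ht₀ ht₁)
  rw [tan_eq_sin_div_cos, ← mul_div_assoc,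
    div_lt_iff₀ (cos_pos_of_nonneg_of_le_six_fifths hx.le hx')]
  calc (1 + z / 10) * sin x
      ≤ (1 + z / 10) * (x - x ^ 3 / 6 + x ^ 5 / 120) := by
        gcongr
        exact sin_le_sub_cube_add_pow hx.le
    _ = x * ((1 + z / 10) * (1 - x ^ 2 / 6 + (x ^ 2) ^ 2 / 120)) := by ring
    _ < x * ((1 + z) * (1 + 3 / 2 * z) *
        (1 - x ^ 2 / 2 + (x ^ 2) ^ 2 / 24 - (x ^ 2) ^ 3 / 720)) := by gcongr
    _ = x * ((1 + z) * (1 + 3 / 2 * z)) * (1 - x ^ 2 / 2 + x ^ 4 / 24 - x ^ 6 / 720) := by ring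
    _ ≤ x * ((1 + z) * (1 + 3 / 2 * z)) * cos x := by
        gcongr
        exact one_sub_sq_add_pow_sub_pow_le_cos hx.le

/-! ### Folding at the zeros of the cosine -/

/-- The `k`-th positive zero of the cosine. -/
noncomputable def cosZero (k : ℕ) : ℝ := (k + 1 / 2) * π

/-- The difference of `u ^ (-p)` at the two points at distance `v` from the `k`-th zero of the
cosine. -/
noncomputable def zeroDiff (p : ℝ) (k : ℕ) (v : ℝ) : ℝ :=
  (cosZero k - v) ^ (-p) - (cosZero k + v) ^ (-p)

/-- The sum of `u ^ (-p - 1)` over the two points at distance `v` from the `k`-th zero of the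
cosine. -/
noncomputable def zeroWeight (p : ℝ) (k : ℕ) (v : ℝ) : ℝ :=
  (cosZero k - v) ^ (-p - 1) + (cosZero k + v) ^ (-p - 1)

/-- The sum of `zeroDiff p k` over all zeros: `p` times the measure, with respect to the density
`u ^ (-p - 1)` on `(0, ∞)`, of the points at distance less than `v` from a zero of the cosine. -/
noncomputable def foldedDiff (p v : ℝ) : ℝ := ∑' k, zeroDiff p k v

/-- The density on `(0, π / 2)` obtained by folding `u ^ (-p - 1)` along the map that sends `u` to
its distance from the zeros of the cosine. -/
noncomputable def foldedWeight (p v : ℝ) : ℝ := ∑' k, zeroWeight p k v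

theorem cosZero_sub_pos (k : ℕ) {v : ℝ} (hv : v < π / 2) : 0 < cosZero k - v := by
  have : 0 ≤ k * π := by positivity
  unfold cosZero
  linarith

theorem cosZero_add_pos (k : ℕ) {v : ℝ} (hv : -(π / 2) < v) : 0 < cosZero k + v := by
  simpa using cosZero_sub_pos k (neg_lt.1 hv)

theorem Ico_zero_subset_Ioo_neg {c : ℝ} (hc : 0 < c) : Set.Ico 0 c ⊆ Set.Ioo (-c) c :=
  Set.Ico_subset_Ioo_left (neg_lt_zero.2 hc)

theorem hasDerivAt_zeroDiff (p : ℝ) (k : ℕ) {v : ℝ} (hv : v ∈ Set.Ioo (-(π / 2)) (π / 2)) :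
    HasDerivAt (zeroDiff p k) (p * zeroWeight p k v) v := by
  have h_sub := ((hasDerivAt_id v).const_sub (cosZero k)).rpow_const (p := -p)
    (Or.inl (cosZero_sub_pos k hv.2).ne')
  have h_add := ((hasDerivAt_id v).const_add (cosZero k)).rpow_const (p := -p)
    (Or.inl (cosZero_add_pos k hv.1).ne')
  refine (h_sub.sub h_add).congr_deriv ?_
  simp only [zeroWeight, id]
  ring

theorem zeroWeight_pos (p : ℝ) (k : ℕ) {v : ℝ} (hv : v ∈ Set.Ioo (-(π / 2)) (π / 2)) :
    0 < zeroWeight p k v :=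
  add_pos (rpow_pos_of_pos (cosZero_sub_pos k hv.2) _)
    (rpow_pos_of_pos (cosZero_add_pos k hv.1) _)

theorem zeroWeight_le {p r v : ℝ} (hp : 0 < p) (k : ℕ) (hr₀ : 0 ≤ r) (hr : r < π / 2)
    (hv : v ∈ Set.Ioo (-r) r) :
    zeroWeight p k v ≤ 2 * (π / 2 - r) ^ (-p - 1) * ((k : ℝ) + 1) ^ (-p - 1) := by
  have hd : 0 < π / 2 - r := by linarith
  have hk : (π / 2 - r) * (k + 1) ≤ cosZero k - r := by
    have : (π / 2 - r) * k ≤ π * k := by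
      gcongr
      linarith [pi_pos]
    unfold cosZero
    linarith
  have h_rpow : ∀ y, cosZero k - r ≤ y →
      y ^ (-p - 1) ≤ (π / 2 - r) ^ (-p - 1) * ((k : ℝ) + 1) ^ (-p - 1) := fun y hy ↦ by
    rw [← mul_rpow hd.le (by positivity)]
    exact rpow_le_rpow_of_nonpos (by positivity) (hk.trans hy) (by linarith)
  have h_sub := h_rpow (cosZero k - v) (by linarith [hv.2])
  have h_add := h_rpow (cosZero k + v) (by linarith [hv.1])
  unfold zeroWeight
  linarith

theorem summable_mul_add_one_rpow {p : ℝ} (hp : 0 < p) (c : ℝ) :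
    Summable fun k : ℕ ↦ c * ((k : ℝ) + 1) ^ (-p - 1) := by
  have h := (summable_nat_add_iff 1).2 ((summable_nat_rpow (p := -p - 1)).2 (by linarith))
  push_cast at h
  exact h.mul_left c

theorem summable_zeroWeight {p : ℝ} (hp : 0 < p) {v : ℝ} (hv : v ∈ Set.Ioo (-(π / 2)) (π / 2)) :
    Summable fun k ↦ zeroWeight p k v := by
  obtain ⟨r, hvr, hr⟩ := exists_between (abs_lt.2 hv)
  exact Summable.of_nonneg_of_le (fun k ↦ (zeroWeight_pos p k hv).le)
    (fun k ↦ zeroWeight_le hp k ((abs_nonneg v).trans hvr.le) hr (abs_lt.1 hvr))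
    (summable_mul_add_one_rpow hp _)

theorem zeroDiff_zero (p : ℝ) (k : ℕ) : zeroDiff p k 0 = 0 := by simp [zeroDiff]

theorem foldedDiff_zero (p : ℝ) : foldedDiff p 0 = 0 := by simp [foldedDiff, zeroDiff_zero]

theorem summable_zeroDiff_and_hasDerivAt_foldedDiff {p : ℝ} (hp : 0 < p) {v : ℝ}
    (hv : v ∈ Set.Ioo (-(π / 2)) (π / 2)) :
    (Summable fun k ↦ zeroDiff p k v) ∧ HasDerivAt (foldedDiff p) (p * foldedWeight p v) v := by
  obtain ⟨r, hvr, hr⟩ := exists_between (abs_lt.2 hv)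
  have hr₀ : 0 < r := (abs_nonneg v).trans_lt hvr
  have hsub : Set.Ioo (-r) r ⊆ Set.Ioo (-(π / 2)) (π / 2) :=
    Set.Ioo_subset_Ioo (neg_le_neg hr.le) hr.le
  have hu := summable_mul_add_one_rpow hp (p * (2 * (π / 2 - r) ^ (-p - 1)))
  have hd : ∀ k, ∀ y ∈ Set.Ioo (-r) r, HasDerivAt (zeroDiff p k) (p * zeroWeight p k y) y :=
    fun k y hy ↦ hasDerivAt_zeroDiff p k (hsub hy)
  have hb : ∀ k : ℕ, ∀ y ∈ Set.Ioo (-r) r, ‖p * zeroWeight p k y‖ ≤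
      p * (2 * (π / 2 - r) ^ (-p - 1)) * ((k : ℝ) + 1) ^ (-p - 1) := fun k y hy ↦ by
    rw [norm_of_nonneg (mul_nonneg hp.le (zeroWeight_pos p k (hsub hy)).le), mul_assoc]
    exact mul_le_mul_of_nonneg_left (zeroWeight_le hp k hr₀.le hr hy) hp.le
  have h₀ : (0 : ℝ) ∈ Set.Ioo (-r) r := ⟨neg_lt_zero.2 hr₀, hr₀⟩
  have hs₀ : Summable fun k ↦ zeroDiff p k 0 := by simp [zeroDiff_zero, summable_zero]
  refine ⟨summable_of_summable_hasDerivAt_of_isPreconnected hu isOpen_Ioo isPreconnected_Ioo hd hb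
    h₀ hs₀ (abs_lt.1 hvr), ?_⟩
  rw [foldedWeight, ← tsum_mul_left]
  exact hasDerivAt_tsum_of_isPreconnected hu isOpen_Ioo isPreconnected_Ioo hd hb h₀ hs₀
    (abs_lt.1 hvr)

theorem summable_zeroDiff {p : ℝ} (hp : 0 < p) {v : ℝ} (hv : v ∈ Set.Ioo (-(π / 2)) (π / 2)) :
    Summable fun k ↦ zeroDiff p k v :=
  (summable_zeroDiff_and_hasDerivAt_foldedDiff hp hv).1

theorem hasDerivAt_foldedDiff {p : ℝ} (hp : 0 < p) {v : ℝ}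
    (hv : v ∈ Set.Ioo (-(π / 2)) (π / 2)) :
    HasDerivAt (foldedDiff p) (p * foldedWeight p v) v :=
  (summable_zeroDiff_and_hasDerivAt_foldedDiff hp hv).2

theorem foldedWeight_pos {p : ℝ} (hp : 0 < p) {v : ℝ} (hv : v ∈ Set.Ioo (-(π / 2)) (π / 2)) :
    0 < foldedWeight p v :=
  (summable_zeroWeight hp hv).tsum_pos (fun k ↦ (zeroWeight_pos p k hv).le) 0
    (zeroWeight_pos p 0 hv)

theorem strictMonoOn_foldedDiff {p : ℝ} (hp : 0 < p) :
    StrictMonoOn (foldedDiff p) (Set.Ioo (-(π / 2)) (π / 2)) := by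
  refine strictMonoOn_of_deriv_pos (convex_Ioo _ _)
    (fun v hv ↦ (hasDerivAt_foldedDiff hp hv).continuousAt.continuousWithinAt) fun v hv ↦ ?_
  rw [interior_Ioo] at hv
  rw [(hasDerivAt_foldedDiff hp hv).deriv]
  exact mul_pos hp (foldedWeight_pos hp hv)

theorem foldedDiff_pos {p : ℝ} (hp : 0 < p) {v : ℝ} (hv : v ∈ Set.Ioo 0 (π / 2)) :
    0 < foldedDiff p v := by
  rw [← foldedDiff_zero p]
  exact strictMonoOn_foldedDiff hp (by simp [pi_pos])
    (Ico_zero_subset_Ioo_neg pi_div_two_pos (Set.Ioo_subset_Ico_self hv)) hv.1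

theorem zeroDiff_nonneg {p : ℝ} (hp : 0 < p) (k : ℕ) {v : ℝ} (hv : v ∈ Set.Ico 0 (π / 2)) :
    0 ≤ zeroDiff p k v := by
  rw [zeroDiff, sub_nonneg]
  exact rpow_le_rpow_of_nonpos (cosZero_sub_pos k hv.2) (by linarith [hv.1]) (by linarith)

theorem rpow_sub_rpow_le_foldedDiff {p : ℝ} (hp : 0 < p) {v : ℝ} (hv : v ∈ Set.Ico 0 (π / 2)) :
    (π / 2 - v) ^ (-p) - (π / 2) ^ (-p) ≤ foldedDiff p v := by
  have hle := (summable_zeroDiff hp (Ico_zero_subset_Ioo_neg pi_div_two_pos hv)).le_tsum 0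
    fun k _ ↦ zeroDiff_nonneg hp k hv
  refine le_trans ?_ hle
  have e : cosZero 0 = π / 2 := by
    rw [cosZero]
    push_cast
    ring
  rw [zeroDiff, e]
  have := rpow_le_rpow_of_nonpos (y := π / 2 + v) (z := -p) pi_div_two_pos (by linarith [hv.1])
    (by linarith)
  linarith

theorem exists_foldedDiff_eq {p z : ℝ} (hp : 0 < p) (hz : 0 < z) :
    ∃ v ∈ Set.Ioo 0 (π / 2), foldedDiff p v = z := by
  have : 0 < (π / 2) ^ (-p) := rpow_pos_of_pos pi_div_two_pos _
  obtain ⟨d, hd₀, hd⟩ : ∃ d : ℝ, 0 < d ∧ d ^ (-p) = z + (π / 2) ^ (-p) :=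
    ⟨(z + (π / 2) ^ (-p)) ^ (-p)⁻¹, by positivity,
      rpow_inv_rpow (by positivity) (neg_ne_zero.2 hp.ne')⟩
  have hd₁ : d < π / 2 := by
    by_contra! h
    linarith [rpow_le_rpow_of_nonpos pi_div_two_pos h (neg_nonpos.2 hp.le)]
  have hmem : π / 2 - d ∈ Set.Ico 0 (π / 2) := ⟨by linarith, by linarith⟩
  have hle := rpow_sub_rpow_le_foldedDiff hp hmem
  rw [sub_sub_cancel, hd, add_sub_cancel_right] at hle
  have hcont : ContinuousOn (foldedDiff p) (Set.Icc 0 (π / 2 - d)) := fun v hv ↦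
    (hasDerivAt_foldedDiff hp (Ico_zero_subset_Ioo_neg pi_div_two_pos
      ⟨hv.1, hv.2.trans_lt hmem.2⟩)).continuousAt.continuousWithinAt
  obtain ⟨v, hv, rfl⟩ := intermediate_value_Icc hmem.1 hcont
    ⟨(foldedDiff_zero p).trans_le hz.le, hle⟩
  refine ⟨v, ⟨lt_of_le_of_ne hv.1 ?_, hv.2.trans_lt hmem.2⟩, rfl⟩
  rintro rfl
  exact hz.ne' (foldedDiff_zero p)

theorem one_sub_mul_le_rpow_neg {x r : ℝ} (hx : 0 < x) (hr : 0 ≤ r) :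
    1 - r * (x - 1) ≤ x ^ (-r) := by
  rw [rpow_def_of_pos hx]
  linarith [add_one_le_exp (log x * -r), mul_le_mul_of_nonneg_left (log_le_sub_one_of_pos hx) hr]

-- The trapezoidal rule overestimates the integral of the convex function `p * u ^ (-p - 1)`.
theorem rpow_neg_sub_rpow_neg_le {p a b : ℝ} (hp : 0 < p) (ha : 0 < a) (hab : a ≤ b) :
    a ^ (-p) - b ^ (-p) ≤ p * ((b - a) / 2) * (a ^ (-p - 1) + b ^ (-p - 1)) := by
  rw [← sub_nonneg]
  refine nonneg_of_hasDerivAt_nonneg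
    (f := fun b ↦ p * ((b - a) / 2) * (a ^ (-p - 1) + b ^ (-p - 1)) - (a ^ (-p) - b ^ (-p)))
    (f' := fun b ↦ p / 2 * (a ^ (-p - 1) - b ^ (-p - 1) - (p + 1) * (b - a) * b ^ (-p - 1 - 1)))
    hab (by simp) (fun y hy ↦ ?_) fun y hy ↦ ?_
  · have hy₀ : y ≠ 0 := (ha.trans_le hy.1).ne'
    refine ((((((hasDerivAt_id y).sub_const a).div_const 2).const_mul p).mul
      ((hasDerivAt_rpow_const (p := -p - 1) (Or.inl hy₀)).const_add _)).sub
      ((hasDerivAt_rpow_const (p := -p) (Or.inl hy₀)).const_sub _)).congr_deriv ?_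
    simp only [id]
    ring
  · have hy₀ : 0 < y := ha.trans hy.1
    have h := one_sub_mul_le_rpow_neg (x := a / y) (r := p + 1) (by positivity) (by linarith)
    rw [neg_add', div_rpow ha.le hy₀.le, le_div_iff₀ (rpow_pos_of_pos hy₀ _)] at h
    have e : (1 - (p + 1) * (a / y - 1)) * y ^ (-p - 1) =
        y ^ (-p - 1) + (p + 1) * (y - a) * y ^ (-p - 1 - 1) := by
      rw [rpow_sub_one hy₀.ne' (-p - 1)]
      field_simp
      ring
    exact mul_nonneg (by positivity) (by linarith)

theorem foldedDiff_le_mul_foldedWeight {p v : ℝ} (hp : 0 < p) (hv : v ∈ Set.Ico 0 (π / 2)) :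
    foldedDiff p v ≤ p * v * foldedWeight p v := by
  have hv' := Ico_zero_subset_Ioo_neg pi_div_two_pos hv
  rw [foldedDiff, foldedWeight, ← tsum_mul_left]
  refine (summable_zeroDiff hp hv').tsum_le_tsum (fun k ↦ ?_)
    ((summable_zeroWeight hp hv').mul_left _)
  have h := rpow_neg_sub_rpow_neg_le hp (cosZero_sub_pos k hv.2) (b := cosZero k + v)
    (by linarith [hv.1])
  rwa [show (cosZero k + v - (cosZero k - v)) / 2 = v by ring] at h

-- The trapezoidal rule on the intervals of half-width `x` around the positive multiples of `π`.
theorem rpow_neg_sub_sum_zeroDiff_le {p x : ℝ} (hp : 0 < p) (hx : x ∈ Set.Ioo 0 (π / 2))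
    (N : ℕ) :
    x ^ (-p) - ∑ k ∈ Finset.range (N + 1), zeroDiff p k (π / 2 - x) - ((N + 1) * π - x) ^ (-p) ≤
      p * x * (∑ k ∈ Finset.range (N + 1), zeroWeight p k (π / 2 - x) - x ^ (-p - 1) -
        ((N + 1) * π - x) ^ (-p - 1)) := by
  have e_sub : ∀ k : ℕ, cosZero k - (π / 2 - x) = k * π + x := fun k ↦ by unfold cosZero; ring
  have e_add : ∀ k : ℕ, cosZero k + (π / 2 - x) = (k + 1) * π - x := fun k ↦ by
    unfold cosZero; ring
  induction N with
  | zero => simp [zeroDiff, zeroWeight, e_sub, e_add]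
  | succ N ih =>
    have hN : 0 ≤ N * π := by positivity
    have h := rpow_neg_sub_rpow_neg_le hp (a := (N + 1) * π - x) (b := (N + 1) * π + x)
      (by linarith [hx.2, pi_pos]) (by linarith [hx.1])
    rw [show ((N + 1) * π + x - ((N + 1) * π - x)) / 2 = x by ring] at h
    rw [Finset.sum_range_succ, Finset.sum_range_succ _ (N + 1)]
    simp only [zeroDiff, zeroWeight, e_sub, e_add] at ih ⊢
    push_cast
    linarith

theorem rpow_neg_sub_foldedDiff_le {p x : ℝ} (hp : 0 < p) (hx : x ∈ Set.Ioo 0 (π / 2)) :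
    (p + 1) * x ^ (-p) - foldedDiff p (π / 2 - x) ≤ p * x * foldedWeight p (π / 2 - x) := by
  have hv : π / 2 - x ∈ Set.Ioo (-(π / 2)) (π / 2) :=
    ⟨by linarith [hx.2, pi_pos], by linarith [hx.1, pi_pos]⟩
  have h_diff := (summable_zeroDiff hp hv).hasSum.tendsto_sum_nat.comp (tendsto_add_atTop_nat 1)
  have h_weight :=
    (summable_zeroWeight hp hv).hasSum.tendsto_sum_nat.comp (tendsto_add_atTop_nat 1)
  have hlim : Tendsto (fun N : ℕ ↦ ((N : ℝ) + 1) * π - x) atTop atTop :=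
    tendsto_atTop_add_const_right _ _
      ((tendsto_atTop_add_const_right _ _ tendsto_natCast_atTop_atTop).atTop_mul_const pi_pos)
  have h_end := (tendsto_rpow_neg_atTop hp).comp hlim
  have h_end' := (tendsto_rpow_neg_atTop (show 0 < p + 1 by linarith)).comp hlim
  have hle := le_of_tendsto_of_tendsto' ((h_diff.const_sub (x ^ (-p))).sub h_end)
    (((h_weight.sub_const (x ^ (-p - 1))).sub h_end').const_mul (p * x)) fun N ↦ by
      simp only [Function.comp]
      rw [neg_add']
      exact rpow_neg_sub_sum_zeroDiff_le hp hx N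
  have e : p * x * x ^ (-p - 1) = p * x ^ (-p) := by
    rw [rpow_sub_one hx.1.ne']
    have := hx.1.ne'
    field_simp
  unfold foldedDiff foldedWeight
  linarith

/-! ### A single crossing -/

theorem one_add_le_one_add_rpow_mul {z q : ℝ} (hz : 0 ≤ z) (hq₀ : 0 ≤ q) (hq₁ : q ≤ 1) :
    1 + z ≤ (1 + z) ^ q * (1 + (1 - q) * z) := by
  have h := rpow_one_add_le_one_add_mul_self (s := z) (by linarith) (p := 1 - q)
    (by linarith) (by linarith)
  calc 1 + z = (1 + z) ^ q * (1 + z) ^ (1 - q) := by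
        rw [← rpow_add (by linarith)]
        simp
    _ ≤ _ := mul_le_mul_of_nonneg_left h (by positivity)

theorem tan_le_inv_pi_div_two_sub {x : ℝ} (hx : x ∈ Set.Ioo 0 (π / 2)) :
    tan x ≤ (π / 2 - x)⁻¹ := by
  have h := mul_cos_le_sin (x := π / 2 - x) (by linarith [hx.2]) (by linarith [hx.1, pi_pos])
  rw [cos_pi_div_two_sub, sin_pi_div_two_sub] at h
  have hs : 0 < sin x := sin_pos_of_pos_of_lt_pi hx.1 (by linarith [hx.2, pi_pos])
  have hc : 0 < cos x := cos_pos_of_mem_Ioo ⟨by linarith [hx.1, hx.2], hx.2⟩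
  rwa [tan_eq_sin_div_cos, le_inv_comm₀ (div_pos hs hc) (by linarith [hx.2]), inv_div,
    le_div_iff₀ hs]

theorem tan_lt_mul_foldedWeight_div_foldedDiff_of_two_le {p x L : ℝ} (hp₀ : 0 < p) (hp₂ : p < 2)
    (hx : x ∈ Set.Ioo 0 (π / 2)) (hL : 2 ≤ L) :
    tan x < L * (foldedWeight p (π / 2 - x) / foldedDiff p (π / 2 - x)) := by
  have hv : π / 2 - x ∈ Set.Ioo 0 (π / 2) := ⟨by linarith [hx.2], by linarith [hx.1]⟩
  have hle := foldedDiff_le_mul_foldedWeight hp₀ (Set.Ioo_subset_Ico_self hv)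
  have h_ratio : (p * (π / 2 - x))⁻¹ ≤
      foldedWeight p (π / 2 - x) / foldedDiff p (π / 2 - x) := by
    rw [inv_eq_one_div, div_le_div_iff₀ (mul_pos hp₀ hv.1) (foldedDiff_pos hp₀ hv)]
    linarith
  have h_inv : 0 < (π / 2 - x)⁻¹ := inv_pos.2 hv.1
  calc tan x ≤ (π / 2 - x)⁻¹ := tan_le_inv_pi_div_two_sub hx
    _ < 2 * (p⁻¹ * (π / 2 - x)⁻¹) := by
        rw [← mul_assoc]
        exact lt_mul_of_one_lt_left h_inv (by rwa [← div_eq_mul_inv, one_lt_div hp₀])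
    _ = 2 * (p * (π / 2 - x))⁻¹ := by rw [mul_inv]
    _ ≤ _ := mul_le_mul hL h_ratio (by rw [mul_inv]; positivity) (by linarith)

theorem rpow_neg_eq_mul_one_add_rpow {p x z g : ℝ} (hp : p ≠ 0) (hx : 0 < x) (hz : 0 ≤ z)
    (hg : 0 < g) (h : g ^ (-(2 / p)) = x ^ 2 * (1 + z)) :
    x ^ (-p) = g * (1 + z) ^ (p / 2) := by
  have hg' : g = x ^ (-p) * (1 + z) ^ (-(p / 2)) := by
    calc g = (g ^ (-(2 / p))) ^ (-(p / 2)) := by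
          rw [← rpow_mul hg.le, show -(2 / p) * -(p / 2) = 1 by field_simp, rpow_one]
      _ = x ^ (-p) * (1 + z) ^ (-(p / 2)) := by
          rw [h, mul_rpow (by positivity) (by positivity), ← rpow_two, ← rpow_mul hx.le]
          ring_nf
  rw [hg', mul_assoc, ← rpow_add (by positivity)]
  simp

-- `9 / 5 ≤ p` means `1 - p / 2 ≤ 1 / 10`, the coefficient in `one_add_div_ten_mul_tan_lt`.
theorem one_add_three_halves_mul_le {p z w b : ℝ} (hp : 9 / 5 ≤ p) (hp₂ : p < 2) (hz : 0 ≤ z)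
    (hw : 0 ≤ w) (hb : b = (1 + z) ^ (p / 2)) (h : (p + 1) * b - 1 ≤ p * w) :
    1 + 3 / 2 * z ≤ w * (1 + z / 10) := by
  have hb' : 1 + z ≤ b * (1 + (1 - p / 2) * z) :=
    hb ▸ one_add_le_one_add_rpow_mul hz (by linarith) (by linarith)
  have hz' : 0 ≤ (1 - p / 2) * z := mul_nonneg (by linarith) hz
  have hle : 1 + 3 / 2 * z ≤ w * (1 + (1 - p / 2) * z) := by
    refine le_of_mul_le_mul_left ?_ (show 0 < p by linarith)
    have h_left := mul_le_mul_of_nonneg_right h (show 0 ≤ 1 + (1 - p / 2) * z by linarith)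
    have h_right := mul_le_mul_of_nonneg_left hb' (show 0 ≤ p + 1 by linarith)
    linarith
  refine hle.trans (mul_le_mul_of_nonneg_left ?_ hw)
  linarith [mul_le_mul_of_nonneg_right (show 1 - p / 2 ≤ 1 / 10 by linarith) hz]

theorem tan_lt_mul_foldedWeight_div_foldedDiff_of_lt_two {p x : ℝ} (hp : 9 / 5 ≤ p) (hp₂ : p < 2)
    (hx : x ∈ Set.Ioo 0 (π / 2)) (hL : -2 * log (cos x) < 2)
    (h : foldedDiff p (π / 2 - x) ^ (-(2 / p)) = -2 * log (cos x)) :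
    tan x < -2 * log (cos x) * (foldedWeight p (π / 2 - x) / foldedDiff p (π / 2 - x)) := by
  have hp₀ : 0 < p := by linarith
  have hx₀ : 0 < x := hx.1
  have hv : π / 2 - x ∈ Set.Ioo 0 (π / 2) := ⟨by linarith [hx.2], by linarith [hx.1]⟩
  have hg := foldedDiff_pos hp₀ hv
  have hW := foldedWeight_pos hp₀
    (Ico_zero_subset_Ioo_neg pi_div_two_pos (Set.Ioo_subset_Ico_self hv))
  have hx₁ := (lt_six_fifths_of_neg_two_mul_log_cos_lt hx.2 hL).le
  have h_poly := sq_mul_one_add_logCosPoly_le hx₀.le hx₁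
  have h_weight := rpow_neg_sub_foldedDiff_le hp₀ hx
  obtain ⟨z, hz⟩ : ∃ z, -2 * log (cos x) = x ^ 2 * (1 + z) :=
    ⟨-2 * log (cos x) / x ^ 2 - 1, by field_simp; ring⟩
  generalize foldedWeight p (π / 2 - x) = W at *
  generalize foldedDiff p (π / 2 - x) = g at *
  rw [hz] at h h_poly ⊢
  have hzp : logCosPoly (x ^ 2) ≤ z := by
    linarith [le_of_mul_le_mul_left h_poly (by positivity)]
  have hz₀ : 0 ≤ z := le_trans (by unfold logCosPoly; positivity) hzp
  have h_three : 1 + 3 / 2 * z ≤ x * (W / g) * (1 + z / 10) := by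
    refine one_add_three_halves_mul_le hp hp₂ hz₀ (by positivity) rfl
      (le_of_mul_le_mul_right ?_ hg)
    rw [rpow_neg_eq_mul_one_add_rpow hp₀.ne' hx₀ hz₀ hg h] at h_weight
    field_simp
    linarith
  refine lt_of_mul_lt_mul_left (a := 1 + z / 10) ?_ (by positivity)
  calc (1 + z / 10) * tan x < x * ((1 + z) * (1 + 3 / 2 * z)) :=
        one_add_div_ten_mul_tan_lt hx₀ hx₁ hzp
    _ ≤ x * ((1 + z) * (x * (W / g) * (1 + z / 10))) := by gcongr
    _ = (1 + z / 10) * (x ^ 2 * (1 + z) * (W / g)) := by ring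

theorem tan_lt_mul_foldedWeight_div_foldedDiff {p x : ℝ} (hp : 9 / 5 ≤ p) (hp₂ : p < 2)
    (hx : x ∈ Set.Ioo 0 (π / 2))
    (h : foldedDiff p (π / 2 - x) ^ (-(2 / p)) = -2 * log (cos x)) :
    tan x < -2 * log (cos x) * (foldedWeight p (π / 2 - x) / foldedDiff p (π / 2 - x)) := by
  rcases le_or_gt 2 (-2 * log (cos x)) with hL | hL
  · exact tan_lt_mul_foldedWeight_div_foldedDiff_of_two_le (by linarith) hp₂ hx hL
  · exact tan_lt_mul_foldedWeight_div_foldedDiff_of_lt_two hp hp₂ hx hL h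

theorem hasDerivAt_foldedDiff_pi_div_two_sub_rpow {p x : ℝ} (hp : 0 < p)
    (hx : x ∈ Set.Ioo 0 (π / 2)) :
    HasDerivAt (fun x ↦ foldedDiff p (π / 2 - x) ^ (-(2 / p)))
      (2 * (foldedDiff p (π / 2 - x) ^ (-(2 / p)) *
        (foldedWeight p (π / 2 - x) / foldedDiff p (π / 2 - x)))) x := by
  have hv : π / 2 - x ∈ Set.Ioo 0 (π / 2) := ⟨by linarith [hx.2], by linarith [hx.1]⟩
  have hg := foldedDiff_pos hp hv
  have hd := (hasDerivAt_foldedDiff hp (Ico_zero_subset_Ioo_neg pi_div_two_pos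
    (Set.Ioo_subset_Ico_self hv))).comp x ((hasDerivAt_id x).const_sub (π / 2))
  refine (hd.rpow_const (p := -(2 / p)) (Or.inl hg.ne')).congr_deriv ?_
  simp only [Function.comp]
  rw [rpow_sub_one hg.ne']
  field_simp

-- By `tan_lt_mul_foldedWeight_div_foldedDiff`, seen from `x = π / 2 - v` the right side grows
-- strictly faster than the left one wherever the two meet, so they cannot cross back.
theorem neg_two_mul_log_sin_le_foldedDiff_rpow_of_le {p v₁ v : ℝ} (hp : 9 / 5 ≤ p) (hp₂ : p < 2)
    (hv₁ : v₁ < π / 2) (hv₀ : 0 < v) (hv : v ≤ v₁)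
    (h : -2 * log (sin v₁) ≤ foldedDiff p v₁ ^ (-(2 / p))) :
    -2 * log (sin v) ≤ foldedDiff p v ^ (-(2 / p)) := by
  have hmem : ∀ x ∈ Set.Icc (π / 2 - v₁) (π / 2 - v), x ∈ Set.Ioo 0 (π / 2) := fun x hx ↦
    ⟨by linarith [hx.1], by linarith [hx.2]⟩
  have hmem' : ∀ x ∈ Set.Ico (π / 2 - v₁) (π / 2 - v), x ∈ Set.Ioo 0 (π / 2) := fun x hx ↦
    hmem x (Set.Ico_subset_Icc_self hx)
  have hL : ∀ x ∈ Set.Ioo 0 (π / 2), HasDerivAt (fun x ↦ -2 * log (cos x)) (2 * tan x) x :=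
    fun x hx ↦ hasDerivAt_neg_two_mul_log_cos
      (cos_pos_of_mem_Ioo ⟨by linarith [hx.1, hx.2], hx.2⟩).ne'
  have hK : ∀ x ∈ Set.Ioo 0 (π / 2), _ := fun x hx ↦
    hasDerivAt_foldedDiff_pi_div_two_sub_rpow (p := p) (by linarith) hx
  have h_image := image_le_of_deriv_right_lt_deriv_boundary'
    (f := fun x ↦ -2 * log (cos x)) (f' := fun x ↦ 2 * tan x)
    (B := fun x ↦ foldedDiff p (π / 2 - x) ^ (-(2 / p)))
    (fun x hx ↦ (hL x (hmem x hx)).continuousAt.continuousWithinAt)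
    (fun x hx ↦ (hL x (hmem' x hx)).hasDerivWithinAt)
    (by simpa [cos_pi_div_two_sub] using h)
    (fun x hx ↦ (hK x (hmem x hx)).continuousAt.continuousWithinAt)
    (fun x hx ↦ (hK x (hmem' x hx)).hasDerivWithinAt)
    (fun x hx he ↦ by
      have := tan_lt_mul_foldedWeight_div_foldedDiff hp hp₂ (hmem' x hx) he.symm
      rw [← he]
      linarith)
  simpa [cos_pi_div_two_sub] using h_image ⟨by linarith, le_refl (π / 2 - v)⟩

/-! ### Comparison of the integrals -/

theorem abs_cos_cosZero_sub (k : ℕ) {v : ℝ} (hv : v ∈ Set.Ioo 0 (π / 2)) :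
    |cos (cosZero k - v)| = sin v := by
  rw [show cosZero k - v = π / 2 - v + k * π by unfold cosZero; ring, cos_add_nat_mul_pi,
    cos_pi_div_two_sub, abs_mul, abs_neg_one_pow, one_mul,
    abs_of_pos (sin_pos_of_pos_of_lt_pi hv.1 (by linarith [hv.2, pi_pos]))]

theorem abs_cos_cosZero_add (k : ℕ) {v : ℝ} (hv : v ∈ Set.Ioo 0 (π / 2)) :
    |cos (cosZero k + v)| = sin v := by
  rw [show cosZero k + v = v + π / 2 + k * π by unfold cosZero; ring, cos_add_nat_mul_pi,
    cos_add_pi_div_two, abs_mul, abs_neg_one_pow, one_mul, abs_neg,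
    abs_of_pos (sin_pos_of_pos_of_lt_pi hv.1 (by linarith [hv.2, pi_pos]))]

theorem setLIntegral_Ioc_sub_add {f : ℝ → ℝ≥0∞} (hf : Measurable f) (c : ℝ) {r : ℝ}
    (hr : 0 ≤ r) :
    ∫⁻ u in Set.Ioc (c - r) (c + r), f u = ∫⁻ v in Set.Ioo 0 r, f (c - v) + f (c + v) := by
  have h_sub := (Measure.measurePreserving_sub_left volume c).setLIntegral_comp_preimage
    (s := Set.Ioo (c - r) c) measurableSet_Ioo hf
  have h_add := (measurePreserving_add_left volume c).setLIntegral_comp_preimage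
    (s := Set.Ioo c (c + r)) measurableSet_Ioo hf
  rw [Set.preimage_const_sub_Ioo, sub_self, sub_sub_cancel] at h_sub
  rw [Set.preimage_const_add_Ioo, sub_self, add_sub_cancel_left] at h_add
  rw [lintegral_add_left (by fun_prop), h_sub, h_add, setLIntegral_congr Ioo_ae_eq_Ioc,
    setLIntegral_congr Ioo_ae_eq_Ioc,
    ← lintegral_union measurableSet_Ioc (Set.Ioc_disjoint_Ioc_of_le le_rfl),
    Set.Ioc_union_Ioc_eq_Ioc (by linarith) (by linarith)]

theorem lintegral_abs_cos_Ioc (p : ℝ) {F : ℝ → ℝ≥0∞} (hF : Measurable F) (k : ℕ) :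
    ∫⁻ u in Set.Ioc (k * π) ((k + 1 : ℕ) * π), F |cos u| * ENNReal.ofReal (u ^ (-p - 1)) =
      ∫⁻ v in Set.Ioo 0 (π / 2), F (sin v) * ENNReal.ofReal (zeroWeight p k v) := by
  have e_sub : (k * π : ℝ) = cosZero k - π / 2 := by unfold cosZero; ring
  have e_add : ((k + 1 : ℕ) * π : ℝ) = cosZero k + π / 2 := by unfold cosZero; push_cast; ring
  rw [e_sub, e_add, setLIntegral_Ioc_sub_add (by fun_prop) _ pi_div_two_pos.le]
  refine setLIntegral_congr_fun measurableSet_Ioo fun v hv ↦ ?_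
  rw [abs_cos_cosZero_sub k hv, abs_cos_cosZero_add k hv, ← mul_add, zeroWeight,
    ENNReal.ofReal_add (rpow_nonneg (cosZero_sub_pos k hv.2).le _)
      (rpow_nonneg (cosZero_add_pos k (by linarith [hv.1, pi_pos])).le _)]

theorem iUnion_Ioc_nat_mul {a : ℝ} (ha : 0 < a) :
    ⋃ k : ℕ, Set.Ioc (k * a) ((k + 1 : ℕ) * a) = Set.Ioi 0 := by
  have h := iUnion_Ioc_map_succ_eq_Ioi (f := fun k : ℕ ↦ (k : ℝ) * a)
    (fun _ ↦ by simp only [Nat.bot_eq_zero, CharP.cast_eq_zero, zero_mul]; positivity)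
    (not_bddAbove_of_tendsto_atTop (tendsto_natCast_atTop_atTop.atTop_mul_const ha))
  simpa using h

theorem lintegral_abs_cos {p : ℝ} (hp : 0 < p) {F : ℝ → ℝ≥0∞} (hF : Measurable F) :
    ∫⁻ u in Set.Ioi 0, F |cos u| * ENNReal.ofReal (u ^ (-p - 1)) =
      ∫⁻ v in Set.Ioo 0 (π / 2), F (sin v) * ENNReal.ofReal (foldedWeight p v) := by
  have hmono : Monotone fun k : ℕ ↦ (k : ℝ) * π := fun a b h ↦ by
    have := pi_pos
    beta_reduce
    gcongr
  rw [← iUnion_Ioc_nat_mul pi_pos, lintegral_iUnion (fun _ ↦ measurableSet_Ioc)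
    (by simpa using hmono.pairwise_disjoint_on_Ioc_succ)]
  simp_rw [lintegral_abs_cos_Ioc p hF]
  rw [← lintegral_tsum fun k ↦ by unfold zeroWeight; fun_prop]
  refine setLIntegral_congr_fun measurableSet_Ioo fun v hv ↦ ?_
  have hv' := Ico_zero_subset_Ioo_neg pi_div_two_pos (Set.Ioo_subset_Ico_self hv)
  rw [ENNReal.tsum_mul_left, foldedWeight, ENNReal.ofReal_tsum_of_nonneg
    (fun k ↦ (zeroWeight_pos p k hv').le) (summable_zeroWeight hp hv')]

/-- The change of variables `(0, π / 2) → (0, ∞)` that transports the density `foldedWeight p` to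
the density `u ^ (-p - 1)`. -/
noncomputable def foldedPoint (p v : ℝ) : ℝ := foldedDiff p v ^ (-(1 / p))

theorem foldedPoint_pos {p v : ℝ} (hp : 0 < p) (hv : v ∈ Set.Ioo 0 (π / 2)) :
    0 < foldedPoint p v := rpow_pos_of_pos (foldedDiff_pos hp hv) _

theorem foldedPoint_sq {p v : ℝ} (hp : 0 < p) (hv : v ∈ Set.Ioo 0 (π / 2)) :
    foldedPoint p v ^ 2 = foldedDiff p v ^ (-(2 / p)) := by
  rw [foldedPoint, ← rpow_mul_natCast (foldedDiff_pos hp hv).le]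
  congr 1
  push_cast
  ring

theorem hasDerivAt_foldedPoint {p v : ℝ} (hp : 0 < p) (hv : v ∈ Set.Ioo 0 (π / 2)) :
    HasDerivAt (foldedPoint p) (-(foldedDiff p v ^ (-(1 / p) - 1) * foldedWeight p v)) v := by
  have hv' := Ico_zero_subset_Ioo_neg pi_div_two_pos (Set.Ioo_subset_Ico_self hv)
  refine ((hasDerivAt_foldedDiff hp hv').rpow_const (p := -(1 / p))
    (Or.inl (foldedDiff_pos hp hv).ne')).congr_deriv ?_
  field_simp

theorem injOn_foldedPoint {p : ℝ} (hp : 0 < p) :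
    Set.InjOn (foldedPoint p) (Set.Ioo 0 (π / 2)) := fun _ ha _ hb h ↦
  (strictMonoOn_foldedDiff hp).injOn
    (Ico_zero_subset_Ioo_neg pi_div_two_pos (Set.Ioo_subset_Ico_self ha))
    (Ico_zero_subset_Ioo_neg pi_div_two_pos (Set.Ioo_subset_Ico_self hb))
    ((rpow_left_inj (foldedDiff_pos hp ha).le (foldedDiff_pos hp hb).le
      (neg_ne_zero.2 (one_div_ne_zero hp.ne'))).1 h)

theorem image_foldedPoint {p : ℝ} (hp : 0 < p) :
    foldedPoint p '' Set.Ioo 0 (π / 2) = Set.Ioi 0 := by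
  refine Set.Subset.antisymm (Set.image_subset_iff.2 fun v hv ↦ foldedPoint_pos hp hv)
    fun u (hu : 0 < u) ↦ ?_
  obtain ⟨v, hv, h⟩ := exists_foldedDiff_eq hp (rpow_pos_of_pos hu (-p))
  refine ⟨v, hv, ?_⟩
  rw [foldedPoint, h, ← rpow_mul hu.le, show -p * -(1 / p) = 1 by field_simp, rpow_one]

theorem lintegral_foldedPoint {p : ℝ} (hp : 0 < p) (F : ℝ → ℝ≥0∞) :
    ∫⁻ u in Set.Ioi 0, F u * ENNReal.ofReal (u ^ (-p - 1)) =
      ∫⁻ v in Set.Ioo 0 (π / 2), F (foldedPoint p v) * ENNReal.ofReal (foldedWeight p v) := by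
  rw [← image_foldedPoint hp, lintegral_image_eq_lintegral_abs_deriv_mul measurableSet_Ioo
    (fun v hv ↦ (hasDerivAt_foldedPoint hp hv).hasDerivWithinAt) (injOn_foldedPoint hp)]
  refine setLIntegral_congr_fun measurableSet_Ioo fun v hv ↦ ?_
  have hg := foldedDiff_pos hp hv
  have hw := foldedWeight_pos hp
    (Ico_zero_subset_Ioo_neg pi_div_two_pos (Set.Ioo_subset_Ico_self hv))
  rw [abs_neg, abs_of_pos (by positivity), mul_left_comm, ← ENNReal.ofReal_mul (by positivity)]
  congr 2
  rw [foldedPoint, ← rpow_mul hg.le, mul_right_comm, ← rpow_add hg,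
    show -(1 / p) - 1 + -(1 / p) * (-p - 1) = 0 by field_simp; ring, rpow_zero, one_mul]

theorem ofReal_defectIntegral_abs_cos_rpow {p s : ℝ} (hp₀ : 0 < p) (hp₂ : p < 2) (hs : 2 ≤ s) :
    ENNReal.ofReal (defectIntegral p fun t ↦ |cos t| ^ s) =
      ∫⁻ v in Set.Ioo 0 (π / 2),
        ENNReal.ofReal (1 - sin v ^ s) * ENNReal.ofReal (foldedWeight p v) := by
  have hi := integrableOn_one_sub_abs_cos_rpow_mul_rpow hp₀ hp₂ hs 1
  simp only [one_mul] at hi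
  rw [ofReal_defectIntegral (abs_cos_rpow_le_one (by linarith)) hi,
    lintegral_abs_cos hp₀ (F := fun y ↦ ENNReal.ofReal (1 - y ^ s)) (by fun_prop)]

theorem ofReal_defectIntegral_exp {p s : ℝ} (hp₀ : 0 < p) (hp₂ : p < 2) (hs : 0 ≤ s) :
    ENNReal.ofReal (defectIntegral p fun t ↦ exp (-(s * t ^ 2 / 2))) =
      ∫⁻ v in Set.Ioo 0 (π / 2), ENNReal.ofReal (1 - exp (-(s * foldedPoint p v ^ 2 / 2))) *
        ENNReal.ofReal (foldedWeight p v) := by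
  rw [ofReal_defectIntegral (fun t ↦ exp_le_one_iff.2 (neg_nonpos.2 (by positivity)))
    (integrableOn_one_sub_exp_mul_rpow hp₀ hp₂ hs), lintegral_foldedPoint hp₀
      (fun u ↦ ENNReal.ofReal (1 - exp (-(s * u ^ 2 / 2))))]

theorem aemeasurable_foldedWeight {p : ℝ} (hp : 0 < p) :
    AEMeasurable (foldedWeight p) (volume.restrict (Set.Ioo 0 (π / 2))) := by
  refine ((measurable_deriv (foldedDiff p)).div_const p).aemeasurable.congr ?_
  filter_upwards [ae_restrict_mem measurableSet_Ioo] with v hv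
  rw [(hasDerivAt_foldedDiff hp
    (Ico_zero_subset_Ioo_neg pi_div_two_pos (Set.Ioo_subset_Ico_self hv))).deriv]
  field_simp

-- `x ↦ x ^ a - a * c ^ (a - 1) * x` decreases up to `c` and increases from there on.
theorem rpow_sub_mul_le {a c y z : ℝ} (ha : 1 ≤ a) (hc : 0 ≤ c) (hy : 0 ≤ y) (hz : 0 < z)
    (h : y ≤ z ∧ z ≤ c ∨ c ≤ z ∧ z ≤ y) :
    z ^ a - a * c ^ (a - 1) * z ≤ y ^ a - a * c ^ (a - 1) * y := by
  have h_tangent : z ^ a + a * z ^ (a - 1) * (y - z) ≤ y ^ a := by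
    have := one_add_mul_self_le_rpow_one_add (s := y / z - 1)
      (by linarith [div_nonneg hy hz.le]) ha
    rw [add_sub_cancel, div_rpow hy hz.le, le_div_iff₀ (by positivity)] at this
    refine Eq.trans_le ?_ this
    rw [rpow_sub_one hz.ne']
    field_simp
  have h_slope : 0 ≤ (z ^ (a - 1) - c ^ (a - 1)) * (y - z) := by
    rcases h with ⟨hyz, hzc⟩ | ⟨hcz, hzy⟩
    · exact mul_nonneg_of_nonpos_of_nonpos
        (sub_nonpos.2 (rpow_le_rpow hz.le hzc (by linarith))) (sub_nonpos.2 hyz)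
    · exact mul_nonneg (sub_nonneg.2 (rpow_le_rpow hc hcz (by linarith))) (sub_nonneg.2 hzy)
  linarith [mul_nonneg (zero_le_one.trans ha) h_slope]

theorem exists_threshold_of_monotoneOn {S : Set ℝ} {f : ℝ → ℝ} {b : ℝ} (hf : MonotoneOn f S)
    (hf₀ : ∀ v ∈ S, 0 ≤ f v) (hfb : ∀ v ∈ S, f v ≤ b) {P : ℝ → Prop}
    (hP : ∀ v ∈ S, ∀ w ∈ S, v ≤ w → P w → P v) :
    ∃ c, 0 ≤ c ∧ ∀ v ∈ S, (P v ∧ f v ≤ c) ∨ (¬P v ∧ c ≤ f v) := by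
  have hbdd : BddAbove (f '' {v | v ∈ S ∧ P v}) := ⟨b, by
    rintro _ ⟨v, hv, rfl⟩
    exact hfb v hv.1⟩
  refine ⟨sSup (f '' {v | v ∈ S ∧ P v}), sSup_nonneg ?_, fun v hv ↦ ?_⟩
  · rintro _ ⟨v, hv, rfl⟩
    exact hf₀ v hv.1
  · by_cases hPv : P v
    · exact Or.inl ⟨hPv, le_csSup hbdd ⟨v, ⟨hv, hPv⟩, rfl⟩⟩
    · refine Or.inr ⟨hPv, Real.sSup_le ?_ (hf₀ v hv)⟩
      rintro _ ⟨w, hw, rfl⟩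
      exact hf hw.1 hv (le_of_not_ge fun hvw ↦ hPv (hP v hv w hw.1 hvw hw.2))

theorem exp_neg_foldedPoint_sq_le_sin_sq_iff {p v : ℝ} (hp : 0 < p)
    (hv : v ∈ Set.Ioo 0 (π / 2)) :
    exp (-foldedPoint p v ^ 2) ≤ sin v ^ 2 ↔
      -2 * log (sin v) ≤ foldedDiff p v ^ (-(2 / p)) := by
  have hsin : 0 < sin v := sin_pos_of_pos_of_lt_pi hv.1 (by linarith [hv.2, pi_pos])
  rw [← le_log_iff_exp_le (by positivity), log_pow, foldedPoint_sq hp hv, neg_le, ← neg_mul]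
  norm_cast

theorem exists_sin_sq_threshold {p : ℝ} (hp : 9 / 5 ≤ p) (hp₂ : p < 2) :
    ∃ c, 0 ≤ c ∧ ∀ v ∈ Set.Ioo 0 (π / 2),
      exp (-foldedPoint p v ^ 2) ≤ sin v ^ 2 ∧ sin v ^ 2 ≤ c ∨
        c ≤ sin v ^ 2 ∧ sin v ^ 2 ≤ exp (-foldedPoint p v ^ 2) := by
  have hp₀ : 0 < p := by linarith
  have hmono : MonotoneOn (fun v ↦ sin v ^ 2) (Set.Ioo 0 (π / 2)) := fun v hv w hw hvw ↦
    pow_le_pow_left₀ (sin_nonneg_of_nonneg_of_le_pi hv.1.le (by linarith [hv.2, pi_pos]))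
      (sin_le_sin_of_le_of_le_pi_div_two (by linarith [hv.1, pi_pos]) hw.2.le hvw) 2
  obtain ⟨c, hc₀, hc⟩ := exists_threshold_of_monotoneOn hmono (fun _ _ ↦ sq_nonneg _)
    (fun v _ ↦ sin_sq_le_one v) (P := fun v ↦ exp (-foldedPoint p v ^ 2) ≤ sin v ^ 2)
    fun v hv w hw hvw h ↦ (exp_neg_foldedPoint_sq_le_sin_sq_iff hp₀ hv).2
      (neg_two_mul_log_sin_le_foldedDiff_rpow_of_le hp hp₂ hw.2 hv.1 hvw
        ((exp_neg_foldedPoint_sq_le_sin_sq_iff hp₀ hw).1 h))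
  exact ⟨c, hc₀, fun v hv ↦ (hc v hv).imp_right fun h ↦ ⟨h.2, (not_le.1 h.1).le⟩⟩

theorem exists_one_sub_exp_add_mul_le {p s : ℝ} (hp : 9 / 5 ≤ p) (hp₂ : p < 2) (hs : 2 ≤ s) :
    ∃ c, 0 ≤ c ∧ ∀ v ∈ Set.Ioo 0 (π / 2),
      1 - exp (-(s * foldedPoint p v ^ 2 / 2)) + c * (1 - sin v ^ (2 : ℝ)) ≤
        1 - sin v ^ s + c * (1 - exp (-(2 * foldedPoint p v ^ 2 / 2))) := by
  obtain ⟨c, hc₀, hc⟩ := exists_sin_sq_threshold hp hp₂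
  refine ⟨s / 2 * c ^ (s / 2 - 1), by positivity, fun v hv ↦ ?_⟩
  have hsin : 0 < sin v := sin_pos_of_pos_of_lt_pi hv.1 (by linarith [hv.2, pi_pos])
  have e_sin : sin v ^ s = (sin v ^ 2) ^ (s / 2) := by
    rw [← rpow_natCast_mul hsin.le]
    congr 1
    push_cast
    ring
  have e_exp : exp (-(s * foldedPoint p v ^ 2 / 2)) = exp (-foldedPoint p v ^ 2) ^ (s / 2) := by
    rw [← exp_mul]
    congr 1
    ring
  have h := rpow_sub_mul_le (a := s / 2) (by linarith) hc₀ (exp_nonneg _) (by positivity)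
    (hc v hv)
  rw [e_sin, e_exp, rpow_two, mul_div_cancel_left₀ _ two_ne_zero]
  linarith

theorem setLIntegral_mul_add_mul_le {α : Type*} [MeasurableSpace α] {μ : Measure α} {S : Set α}
    (hS : MeasurableSet S) {f g f' g' w : α → ℝ≥0∞} {c : ℝ≥0∞} (hc : c ≠ ∞)
    (hf' : AEMeasurable f' (μ.restrict S)) (hw : AEMeasurable w (μ.restrict S))
    (h : ∀ x ∈ S, f x + c * g x ≤ f' x + c * g' x) :
    ∫⁻ x in S, f x * w x ∂μ + c * ∫⁻ x in S, g x * w x ∂μ ≤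
      ∫⁻ x in S, f' x * w x ∂μ + c * ∫⁻ x in S, g' x * w x ∂μ := by
  rw [← lintegral_const_mul' _ _ hc, ← lintegral_const_mul' _ _ hc,
    ← lintegral_add_left' (f := fun x ↦ f' x * w x) (hf'.mul hw)]
  refine (le_lintegral_add _ _).trans
    (setLIntegral_mono_ae' hS (ae_of_all _ fun x hx ↦ ?_))
  rw [← mul_assoc, ← mul_assoc, ← add_mul, ← add_mul]
  exact mul_le_mul_left (h x hx) (w x)

theorem exists_defectIntegral_exp_add_mul_le {p s : ℝ} (hp : 9 / 5 ≤ p) (hp₂ : p < 2)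
    (hs : 2 ≤ s) :
    ∃ c, 0 ≤ c ∧ defectIntegral p (fun t ↦ exp (-(s * t ^ 2 / 2))) +
        c * defectIntegral p (fun t ↦ |cos t| ^ (2 : ℝ)) ≤
      defectIntegral p (fun t ↦ |cos t| ^ s) +
        c * defectIntegral p (fun t ↦ exp (-(2 * t ^ 2 / 2))) := by
  have hp₀ : 0 < p := by linarith
  have hs₀ : 0 ≤ s := by linarith
  obtain ⟨c, hc₀, hc⟩ := exists_one_sub_exp_add_mul_le hp hp₂ hs
  have h_exp : ∀ s u : ℝ, 0 ≤ s → exp (-(s * u ^ 2 / 2)) ≤ 1 := fun s u hs ↦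
    exp_le_one_iff.2 (neg_nonpos.2 (by positivity))
  have h_sin : ∀ v ∈ Set.Ioo 0 (π / 2), ∀ s : ℝ, 0 ≤ s → sin v ^ s ≤ 1 := fun v hv s hs ↦
    rpow_le_one (sin_nonneg_of_nonneg_of_le_pi hv.1.le (by linarith [hv.2, pi_pos]))
      (sin_le_one v) hs
  have h_exp_s := defectIntegral_nonneg (p := p) fun t ↦ h_exp s t hs₀
  have h_exp_two := defectIntegral_nonneg (p := p) fun t ↦ h_exp 2 t zero_le_two
  have h_cos_s := defectIntegral_nonneg (p := p) (abs_cos_rpow_le_one hs₀)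
  have h_cos_two := defectIntegral_nonneg (p := p) (abs_cos_rpow_le_one zero_le_two)
  refine ⟨c, hc₀, ?_⟩
  rw [← ENNReal.ofReal_le_ofReal_iff (by positivity), ENNReal.ofReal_add h_exp_s (by positivity),
    ENNReal.ofReal_add h_cos_s (by positivity), ENNReal.ofReal_mul hc₀, ENNReal.ofReal_mul hc₀,
    ofReal_defectIntegral_exp hp₀ hp₂ hs₀, ofReal_defectIntegral_exp hp₀ hp₂ zero_le_two,
    ofReal_defectIntegral_abs_cos_rpow hp₀ hp₂ hs,
    ofReal_defectIntegral_abs_cos_rpow hp₀ hp₂ le_rfl]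
  refine setLIntegral_mul_add_mul_le measurableSet_Ioo ENNReal.ofReal_ne_top (by fun_prop)
    (aemeasurable_foldedWeight hp₀).ennreal_ofReal fun v hv ↦ ?_
  rw [← ENNReal.ofReal_mul hc₀, ← ENNReal.ofReal_mul hc₀,
    ← ENNReal.ofReal_add (sub_nonneg.2 (h_exp s _ hs₀))
      (mul_nonneg hc₀ (sub_nonneg.2 (h_sin v hv 2 zero_le_two))),
    ← ENNReal.ofReal_add (sub_nonneg.2 (h_sin v hv s hs₀))
      (mul_nonneg hc₀ (sub_nonneg.2 (h_exp 2 _ zero_le_two)))]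
  exact ENNReal.ofReal_le_ofReal (hc v hv)

theorem defectIntegral_exp_le_defectIntegral_abs_cos_rpow {p s : ℝ} (hp : 9 / 5 ≤ p)
    (hp₂ : p < 2) (hs : 2 ≤ s)
    (h_two : defectIntegral p (fun t ↦ exp (-(2 * t ^ 2 / 2))) ≤
      defectIntegral p fun t ↦ |cos t| ^ (2 : ℝ)) :
    defectIntegral p (fun t ↦ exp (-(s * t ^ 2 / 2))) ≤ defectIntegral p fun t ↦ |cos t| ^ s := by
  obtain ⟨c, hc₀, hc⟩ := exists_defectIntegral_exp_add_mul_le hp hp₂ hs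
  linarith [mul_le_mul_of_nonneg_left h_two hc₀]

theorem gaussianMoment_mul_sqSum_rpow_le_signMoment {p : ℝ} (hp : 9 / 5 ≤ p) (hp₂ : p < 2)
    (hΓ : Gamma ((p + 1) / 2) ≤ √π / 2) (l : List ℝ) :
    gaussianMoment p * sqSum l ^ (p / 2) ≤ signMoment p l := by
  have hp₀ : 0 < p := by linarith
  have h_cos := defectIntegral_cos_pos hp₀ hp₂
  have h_moment : gaussianMoment p ≤ 2 ^ (p / 2 - 1) := by
    have : 0 < √π := sqrt_pos.2 pi_pos
    rw [gaussianMoment_eq (by linarith), rpow_sub_one two_ne_zero, div_le_div_iff₀ this two_pos]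
    nlinarith [rpow_pos_of_pos two_pos (p / 2)]
  have h_two : defectIntegral p (fun t ↦ exp (-(2 * t ^ 2 / 2))) ≤
      defectIntegral p fun t ↦ |cos t| ^ (2 : ℝ) := by
    rw [defectIntegral_exp_mul hp₀ hp₂ zero_le_two, defectIntegral_abs_cos_sq hp₀ hp₂,
      mul_right_comm]
    refine mul_le_mul_of_nonneg_right ?_ h_cos.le
    calc gaussianMoment p * 2 ^ (p / 2) ≤ 2 ^ (p / 2 - 1) * 2 ^ (p / 2) := by gcongr
      _ = 2 ^ (p - 1) := by rw [← rpow_add two_pos]; ring_nf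
  have hflat : ∀ l : List ℝ, (∀ b ∈ l, 2 * b ^ 2 ≤ sqSum l) →
      gaussianMoment p * sqSum l ^ (p / 2) ≤ signMoment p l := fun l hl ↦ by
    have h := mul_sqSum_rpow_le_signMoment_mul_of_flat hp₀ hp₂ (fun s hs ↦
      (defectIntegral_exp_mul hp₀ hp₂ (zero_le_two.trans hs)).symm.trans_le
        (defectIntegral_exp_le_defectIntegral_abs_cos_rpow hp hp₂ hs h_two)) hl
    rw [mul_right_comm] at h
    exact le_of_mul_le_mul_right h h_cos
  have e : 2 * (p / 2) = p := mul_div_cancel₀ p two_ne_zero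
  have h := mul_sqSum_rpow_le_signMoment_of_flat (q := p / 2) (by linarith) (by linarith)
    (gaussianMoment_pos (by linarith)).le h_moment (by rwa [e])
  rw [e] at h
  exact h l

/-! ### Khintchine's inequality -/

theorem two_sub_mul_rpow_le {p r x : ℝ} (hr : 0 < r) (hrp : r ≤ p) (hp₂ : p < 2) (hx : 0 ≤ x) :
    (2 - r) * x ^ p ≤ (2 - p) * x ^ r + (p - r) * x ^ 2 := by
  have hr₂ : 0 < 2 - r := by linarith
  have hα₀ : 0 ≤ (2 - p) / (2 - r) := div_nonneg (by linarith) hr₂.le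
  have hβ₀ : 0 ≤ (p - r) / (2 - r) := div_nonneg (by linarith) hr₂.le
  have h := geom_mean_le_arith_mean2_weighted hα₀ hβ₀ (rpow_nonneg hx r) (sq_nonneg x)
    (by field_simp; ring)
  have e : (x ^ r) ^ ((2 - p) / (2 - r)) * (x ^ 2) ^ ((p - r) / (2 - r)) = x ^ p := by
    rw [← rpow_two, ← rpow_mul hx, ← rpow_mul hx, ← rpow_add_of_nonneg hx (by positivity)
      (by positivity)]
    congr 1
    field_simp
    ring
  rw [e] at h
  have h_mul := mul_le_mul_of_nonneg_left h hr₂.le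
  field_simp at h_mul
  linarith

theorem two_sub_mul_signMoment_div_rpow_le {p r s : ℝ} (hr : 0 < r) (hrp : r ≤ p) (hp₂ : p < 2)
    (hs : 0 < s) (l : List ℝ) :
    (2 - r) * (signMoment p l / s ^ p) ≤
      (2 - p) * (signMoment r l / s ^ r) + (p - r) * (sqSum l / s ^ 2) := by
  have h := signAvg_mono l (0 : ℝ) fun y ↦
    two_sub_mul_rpow_le hr hrp hp₂ (div_nonneg (abs_nonneg y) hs.le)
  simp only [div_rpow (abs_nonneg _) hs.le, div_pow, sq_abs] at h
  simp only [div_eq_inv_mul] at h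
  rw [signAvg_add l (fun y ↦ (2 - p) * ((s ^ r)⁻¹ * |y| ^ r))] at h
  simp only [signAvg_const_mul, signAvg_sq] at h
  simpa [signMoment, div_eq_inv_mul] using h

-- The equality case is that of two equal coefficients, where the sum is `± 2 * a` or `0`, so that
-- interpolating between the exponents `r` and `2` loses nothing.
theorem two_mul_sqSum_rpow_le_of_le {p r : ℝ} (hr : 0 < r) (hrp : r ≤ p) (hp₂ : p < 2)
    {l : List ℝ} (h : (2 * sqSum l) ^ (p / 2) ≤ 2 * signMoment p l) :
    (2 * sqSum l) ^ (r / 2) ≤ 2 * signMoment r l := by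
  rcases (sqSum_nonneg l).eq_or_lt with h₀ | h₀
  · rw [← h₀, mul_zero, zero_rpow (by positivity)]
    exact mul_nonneg zero_le_two (signMoment_nonneg r l)
  have hs : 0 < √(2 * sqSum l) := sqrt_pos.2 (by positivity)
  have e : ∀ q : ℝ, (2 * sqSum l) ^ (q / 2) = √(2 * sqSum l) ^ q := fun q ↦ by
    rw [rpow_div_two_eq_sqrt q (by positivity)]
  rw [e] at h ⊢
  have h_interp := two_sub_mul_signMoment_div_rpow_le hr hrp hp₂ hs l
  rw [sq_sqrt (by positivity), div_mul_cancel_right₀ h₀.ne'] at h_interp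
  have h_half : 2⁻¹ ≤ signMoment p l / √(2 * sqSum l) ^ p := by
    rw [le_div_iff₀ (by positivity)]
    linarith
  have h_mul : (2 - p) * 2⁻¹ ≤ (2 - p) * (signMoment r l / √(2 * sqSum l) ^ r) := by
    linarith [mul_le_mul_of_nonneg_left h_half (show 0 ≤ 2 - r by linarith)]
  have := le_of_mul_le_mul_left h_mul (by linarith)
  rw [le_div_iff₀ (by positivity)] at this
  linarith

theorem khintchineA_nonneg {r : ℝ} (hr : -1 < r) : 0 ≤ khintchineA r := by
  have := (Gamma_pos_of_pos (show 0 < (r + 1) / 2 by linarith)).le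
  unfold khintchineA
  split_ifs <;> positivity

theorem khintchineA_rpow_of_le {r : ℝ} (hr : r ≠ 0) (h : r ≤ khintchineP0) :
    khintchineA r ^ r = 2 ^ (1 - r / 2) := by
  rw [khintchineA, if_pos h, ← rpow_mul zero_le_two]
  congr 1
  field_simp

theorem khintchineA_rpow_of_lt {r : ℝ} (hr : 0 < r) (h₁ : khintchineP0 < r) (h₂ : r < 2) :
    khintchineA r ^ r = (gaussianMoment r)⁻¹ := by
  have := Gamma_pos_of_pos (show 0 < (r + 1) / 2 by linarith)
  rw [khintchineA, if_neg h₁.not_ge, if_pos h₂, gaussianMoment_eq (by linarith),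
    mul_rpow (by positivity) (by positivity), ← rpow_mul (by positivity),
    show -(1 / r) * r = -1 by field_simp, rpow_neg_one, one_div, inv_rpow (by positivity),
    ← rpow_div_two_eq_sqrt r zero_le_two, ← mul_inv, mul_div_assoc]

theorem khintchineA_two : khintchineA 2 = 1 := by
  rw [khintchineA, if_neg khintchineP0_lt_two.not_ge, if_neg (lt_irrefl _)]

theorem gaussianMoment_khintchineP0 : gaussianMoment khintchineP0 = 2 ^ (khintchineP0 / 2 - 1) := by
  rw [gaussianMoment_eq (by linarith [nine_fifths_le_khintchineP0]),
    Gamma_khintchineP0_add_one_div_two, rpow_sub_one two_ne_zero]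
  have := sqrt_pos.2 pi_pos
  field_simp

theorem two_mul_sqSum_rpow_khintchineP0_le (l : List ℝ) :
    (2 * sqSum l) ^ (khintchineP0 / 2) ≤ 2 * signMoment khintchineP0 l := by
  have h := gaussianMoment_mul_sqSum_rpow_le_signMoment nine_fifths_le_khintchineP0
    khintchineP0_lt_two Gamma_khintchineP0_add_one_div_two.le l
  rw [gaussianMoment_khintchineP0, rpow_sub_one two_ne_zero, div_mul_eq_mul_div,
    ← mul_rpow zero_le_two (sqSum_nonneg l)] at h
  linarith

theorem sqSum_rpow_le_khintchineA_rpow_mul_signMoment {r : ℝ} (hr₀ : 0 < r) (hr₂ : r ≤ 2)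
    (l : List ℝ) : sqSum l ^ (r / 2) ≤ khintchineA r ^ r * signMoment r l := by
  rcases le_or_gt r khintchineP0 with h | h
  · have := two_mul_sqSum_rpow_le_of_le hr₀ h khintchineP0_lt_two
      (two_mul_sqSum_rpow_khintchineP0_le l)
    rw [mul_rpow zero_le_two (sqSum_nonneg l)] at this
    rw [khintchineA_rpow_of_le hr₀.ne' h, rpow_sub two_pos, rpow_one, div_mul_eq_mul_div,
      le_div_iff₀' (by positivity)]
    exact this
  rcases hr₂.eq_or_lt with rfl | hr₂
  · simp [khintchineA_two, signMoment_two]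
  · rw [khintchineA_rpow_of_lt hr₀ h hr₂, ← div_eq_inv_mul,
      le_div_iff₀' (gaussianMoment_pos (by linarith))]
    exact gaussianMoment_mul_sqSum_rpow_le_signMoment
      (nine_fifths_le_khintchineP0.trans h.le) hr₂
      (Gamma_add_one_div_two_le_of_khintchineP0_le h.le hr₂.le) l

theorem signAvg_ofFn {n : ℕ} (c : Fin n → ℝ) (f : ℝ → ℝ) (x : ℝ) :
    signAvg (List.ofFn c) f x = 𝔼 ε : Fin n → ℤˣ, f (x + ∑ i, c i * (ε i : ℤ)) := by
  induction n generalizing x with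
  | zero => simp [signAvg_nil]
  | succ n ih =>
    rw [List.ofFn_succ, signAvg_cons, ih, ih, ← Finset.expect_add_distrib, Finset.expect_div,
      ← Fintype.expect_equiv (Fin.consEquiv fun _ ↦ ℤˣ) _ _ fun _ ↦ rfl, ← Finset.univ_product_univ,
      Finset.expect_product, Finset.expect_comm]
    refine Finset.expect_congr rfl fun ε _ ↦ ?_
    rw [Fintype.expect_eq_sum_div_card, Fintype.card_units_int, UnitsInt.univ]
    simp [Fin.sum_univ_succ, Fin.consEquiv]
    ring_nf

theorem sqSum_ofFn {n : ℕ} (c : Fin n → ℝ) : sqSum (List.ofFn c) = ∑ i, c i ^ 2 := by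
  simp [sqSum, List.sum_ofFn]

theorem khintchine_inequality {r : ℝ} (hr₀ : 0 < r) (hr₂ : r ≤ 2) {n : ℕ} (c : Fin n → ℝ) :
    (∑ i, c i ^ 2) ^ (r / 2) ≤
      khintchineA r ^ r * 𝔼 ε : Fin n → ℤˣ, |∑ i, c i * (ε i : ℤ)| ^ r := by
  simpa [signMoment, signAvg_ofFn, sqSum_ofFn] using
    sqSum_rpow_le_khintchineA_rpow_mul_signMoment hr₀ hr₂ (List.ofFn c)

theorem Lp_sum_le_of_nonneg {ι κ : Type*} [Fintype ι] (t : Finset κ) {f : κ → ι → ℝ} {s : ℝ}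
    (hs : 1 ≤ s) (hf : ∀ k i, 0 ≤ f k i) :
    (∑ i, (∑ k ∈ t, f k i) ^ s) ^ (1 / s) ≤ ∑ k ∈ t, (∑ i, f k i ^ s) ^ (1 / s) := by
  classical
  induction t using Finset.induction_on with
  | empty => simp [zero_rpow (show s ≠ 0 by linarith), zero_rpow (show s⁻¹ ≠ 0 by positivity)]
  | insert k t hk ih =>
    simp_rw [Finset.sum_insert hk]
    exact (Lp_add_le_of_nonneg Finset.univ hs (fun i _ ↦ hf k i)
      fun i _ ↦ Finset.sum_nonneg fun _ _ ↦ hf _ _).trans (by gcongr)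

theorem Lp_const_mul {ι : Type*} [Fintype ι] {f : ι → ℝ} {s c : ℝ} (hs : s ≠ 0) (hc : 0 ≤ c)
    (hf : ∀ i, 0 ≤ f i) : (∑ i, (c * f i) ^ s) ^ (1 / s) = c * (∑ i, f i ^ s) ^ (1 / s) := by
  have h : 0 ≤ ∑ i, f i ^ s := Finset.sum_nonneg fun i _ ↦ rpow_nonneg (hf i) s
  simp only [mul_rpow hc (hf _), ← Finset.mul_sum]
  rw [mul_rpow (by positivity) h, ← rpow_mul hc, mul_one_div_cancel hs, rpow_one]

theorem Lp_expect_le_of_nonneg {ι κ : Type*} [Fintype ι] [Fintype κ] {f : κ → ι → ℝ} {s : ℝ}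
    (hs : 1 ≤ s) (hf : ∀ k i, 0 ≤ f k i) :
    (∑ i, (𝔼 k, f k i) ^ s) ^ (1 / s) ≤ 𝔼 k, (∑ i, f k i ^ s) ^ (1 / s) := by
  simp only [Fintype.expect_eq_sum_div_card, div_eq_inv_mul _ (Fintype.card κ : ℝ)]
  rw [Lp_const_mul (by positivity) (by positivity) fun i ↦ Finset.sum_nonneg fun k _ ↦ hf k i]
  gcongr
  exact Lp_sum_le_of_nonneg Finset.univ hs hf

theorem abs_rpow_rpow_two_div {r : ℝ} (hr : r ≠ 0) (z : ℝ) : (|z| ^ r) ^ (2 / r) = z ^ 2 := by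
  rw [← rpow_mul (abs_nonneg z), mul_div_cancel₀ 2 hr, rpow_two, sq_abs]

theorem khintchine_inequality_matrix {r : ℝ} (hr₀ : 0 < r) (hr₂ : r ≤ 2) {ι : Type*} [Fintype ι]
    {n : ℕ} (c : ι → Fin n → ℝ) :
    (∑ i, ∑ j, c i j ^ 2) ^ (r / 2) ≤ khintchineA r ^ r *
      𝔼 ε : Fin n → ℤˣ, (∑ i, (∑ j, c i j * (ε j : ℤ)) ^ 2) ^ (r / 2) := by
  have hs : 1 ≤ 2 / r := (one_le_div hr₀).2 hr₂
  have hA : 0 ≤ khintchineA r ^ r := rpow_nonneg (khintchineA_nonneg (by linarith)) r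
  have h_row : ∀ i, ∑ j, c i j ^ 2 ≤ (khintchineA r ^ r *
      𝔼 ε : Fin n → ℤˣ, |∑ j, c i j * (ε j : ℤ)| ^ r) ^ (2 / r) := fun i ↦ by
    have h : 0 ≤ ∑ j, c i j ^ 2 := by positivity
    simpa [← rpow_mul h, hr₀.ne'] using rpow_le_rpow (z := 2 / r) (by positivity)
      (khintchine_inequality hr₀ hr₂ (c i)) (by positivity)
  calc (∑ i, ∑ j, c i j ^ 2) ^ (r / 2)
    _ ≤ (∑ i, (khintchineA r ^ r *
          𝔼 ε : Fin n → ℤˣ, |∑ j, c i j * (ε j : ℤ)| ^ r) ^ (2 / r)) ^ (1 / (2 / r)) := by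
        rw [one_div_div]
        gcongr with i
        exact h_row i
    _ = khintchineA r ^ r * (∑ i,
          (𝔼 ε : Fin n → ℤˣ, |∑ j, c i j * (ε j : ℤ)| ^ r) ^ (2 / r)) ^ (1 / (2 / r)) :=
        Lp_const_mul (by positivity) hA fun i ↦ Finset.expect_nonneg fun ε _ ↦ by positivity
    _ ≤ khintchineA r ^ r * 𝔼 ε : Fin n → ℤˣ,
          (∑ i, (|∑ j, c i j * (ε j : ℤ)| ^ r) ^ (2 / r)) ^ (1 / (2 / r)) := by
        gcongr
        exact Lp_expect_le_of_nonneg hs fun ε i ↦ by positivity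
    _ = _ := by simp only [abs_rpow_rpow_two_div hr₀.ne', one_div_div]

/-! ### Multilinear forms -/

theorem linearMap_apply_eq_sum_single {R V ι : Type*} [Semiring R] [AddCommMonoid V]
    [Module R V] [Fintype ι] [DecidableEq ι] (φ : (ι → R) →ₗ[R] V) (x : ι → R) :
    φ x = ∑ j, x j • φ (Pi.single j 1) := by
  rw [φ.pi_apply_eq_sum_univ x]
  congr! with j _ k
  simp only [Pi.single_apply, eq_comm]

theorem sum_sq_eq_sum_curryLeft {m n : ℕ}
    (B : MultilinearMap ℝ (fun _ : Fin (m + 1) ↦ Fin n → ℝ) ℝ) :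
    ∑ i : Fin (m + 1) → Fin n, B (fun k ↦ Pi.single (i k) 1) ^ 2 =
      ∑ i : Fin m → Fin n, ∑ j, B.curryLeft (Pi.single j 1) (fun k ↦ Pi.single (i k) 1) ^ 2 := by
  rw [← (Fin.consEquiv fun _ ↦ Fin n).sum_comp, Fintype.sum_prod_type, Finset.sum_comm]
  refine Finset.sum_congr rfl fun i _ ↦ Finset.sum_congr rfl fun j _ ↦ ?_
  rw [MultilinearMap.curryLeft_apply]
  congr 2
  ext k : 1
  refine Fin.cases ?_ (fun k ↦ ?_) k <;> simp [Fin.consEquiv]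

theorem sum_sq_rpow_le_expect_curryLeft {r : ℝ} (hr₀ : 0 < r) (hr₂ : r ≤ 2) {m n : ℕ}
    (B : MultilinearMap ℝ (fun _ : Fin (m + 1) ↦ Fin n → ℝ) ℝ) :
    (∑ i : Fin (m + 1) → Fin n, B (fun k ↦ Pi.single (i k) 1) ^ 2) ^ (r / 2) ≤
      khintchineA r ^ r * 𝔼 ε : Fin n → ℤˣ, (∑ i : Fin m → Fin n,
        B.curryLeft (fun j ↦ (ε j : ℤ)) (fun k ↦ Pi.single (i k) 1) ^ 2) ^ (r / 2) := by
  have h := khintchine_inequality_matrix hr₀ hr₂ fun (i : Fin m → Fin n) j ↦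
    B.curryLeft (Pi.single j 1) (fun k ↦ Pi.single (i k) 1)
  have h_apply : ∀ (ε : Fin n → ℤˣ) (y : Fin m → Fin n → ℝ),
      ∑ j, B.curryLeft (Pi.single j 1) y * (ε j : ℤ) = B.curryLeft (fun j ↦ (ε j : ℤ)) y := by
    intro ε y
    rw [linearMap_apply_eq_sum_single B.curryLeft fun j ↦ ((ε j : ℤ) : ℝ), _root_.sum_apply]
    simp only [_root_.smul_apply, smul_eq_mul, mul_comm]
  rw [sum_sq_eq_sum_curryLeft]
  simpa only [h_apply] using h

theorem sum_sum_sq_rpow_le {r : ℝ} (hr₀ : 0 < r) (hr₂ : r ≤ 2) {ι : Type*} [Fintype ι] {m n : ℕ}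
    {C : ℝ} (B : ι → MultilinearMap ℝ (fun _ : Fin m ↦ Fin n → ℝ) ℝ)
    (hB : ∀ y : Fin m → Fin n → ℝ, (∀ k j, |y k j| ≤ 1) → ∑ a, |B a y| ^ r ≤ C) :
    ∑ a, (∑ i : Fin m → Fin n, B a (fun k ↦ Pi.single (i k) 1) ^ 2) ^ (r / 2) ≤
      (khintchineA r ^ r) ^ m * C := by
  have hA : 0 ≤ khintchineA r ^ r := rpow_nonneg (khintchineA_nonneg (by linarith)) r
  induction m with
  | zero =>
    refine le_of_eq_of_le ?_ (hB 0 fun k ↦ k.elim0) |>.trans (by simp)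
    refine Finset.sum_congr rfl fun a _ ↦ ?_
    rw [Fintype.sum_unique, ← abs_rpow_two_mul, mul_div_cancel₀ r two_ne_zero,
      Subsingleton.elim (fun k ↦ _) (0 : Fin 0 → Fin n → ℝ)]
  | succ m ih =>
    have h_slice : ∀ ε : Fin n → ℤˣ, ∑ a, (∑ i : Fin m → Fin n, (B a).curryLeft
        (fun j ↦ (ε j : ℤ)) (fun k ↦ Pi.single (i k) 1) ^ 2) ^ (r / 2) ≤
        (khintchineA r ^ r) ^ m * C := fun ε ↦
      ih (fun a ↦ (B a).curryLeft fun j ↦ (ε j : ℤ)) fun y hy ↦ hB (Fin.cons _ y)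
        (Fin.cases (fun j ↦ by obtain h | h := Int.units_eq_one_or (ε j) <;> simp [h]) hy)
    calc ∑ a, (∑ i : Fin (m + 1) → Fin n, B a (fun k ↦ Pi.single (i k) 1) ^ 2) ^ (r / 2)
      _ ≤ ∑ a, khintchineA r ^ r * 𝔼 ε : Fin n → ℤˣ, (∑ i : Fin m → Fin n, (B a).curryLeft
            (fun j ↦ (ε j : ℤ)) (fun k ↦ Pi.single (i k) 1) ^ 2) ^ (r / 2) :=
          Finset.sum_le_sum fun a _ ↦ sum_sq_rpow_le_expect_curryLeft hr₀ hr₂ (B a)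
      _ = khintchineA r ^ r * 𝔼 ε : Fin n → ℤˣ, ∑ a, (∑ i : Fin m → Fin n, (B a).curryLeft
            (fun j ↦ (ε j : ℤ)) (fun k ↦ Pi.single (i k) 1) ^ 2) ^ (r / 2) := by
          rw [← Finset.mul_sum, Finset.expect_sum_comm]
      _ ≤ khintchineA r ^ r * ((khintchineA r ^ r) ^ m * C) :=
          mul_le_mul_of_nonneg_left
            (Finset.expect_le Finset.univ_nonempty fun ε _ ↦ h_slice ε) hA
      _ = (khintchineA r ^ r) ^ (m + 1) * C := by ring

theorem abs_le_lpNorm {p : ℝ} (hp : 0 < p) {n : ℕ} (x : Fin n → ℝ) (i : Fin n) :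
    |x i| ≤ lpNorm p x :=
  calc |x i| = (|x i| ^ p) ^ (1 / p) := by
        rw [one_div, rpow_rpow_inv (abs_nonneg _) hp.ne']
    _ ≤ lpNorm p x := by
        unfold _root_.lpNorm
        gcongr
        exact Finset.single_le_sum (f := fun i ↦ |x i| ^ p) (fun i _ ↦ by positivity)
          (Finset.mem_univ i)

theorem abs_le_linfNorm {n : ℕ} (x : Fin n → ℝ) (i : Fin n) : |x i| ≤ linfNorm x :=
  le_ciSup (f := fun i ↦ |x i|) (Set.finite_range _).bddAbove i

theorem exists_lpNorm_le_one_sum_mul_eq {p r : ℝ} (hpr : r.HolderConjugate p) {n : ℕ}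
    (z : Fin n → ℝ) :
    ∃ x : Fin n → ℝ, lpNorm p x ≤ 1 ∧ ∑ i, x i * z i = (∑ i, |z i| ^ r) ^ (1 / r) := by
  have hp := hpr.symm.pos
  obtain ⟨⟨g, hg, hgz⟩, -⟩ := NNReal.isGreatest_Lp Finset.univ (fun i ↦ ‖z i‖₊) hpr
  refine ⟨fun i ↦ SignType.sign (z i) * g i, ?_, ?_⟩
  · have h_abs : ∀ i, |(SignType.sign (z i) : ℝ) * g i| ≤ g i := fun i ↦ by
      rcases lt_trichotomy (z i) 0 with h | h | h <;> simp [h]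
    refine rpow_le_one (by positivity) ?_ (by positivity)
    calc ∑ i, |(SignType.sign (z i) : ℝ) * g i| ^ p ≤ ∑ i, (g i : ℝ) ^ p := by
          gcongr with i
          exact h_abs i
      _ ≤ 1 := by exact_mod_cast hg
  · simp only [mul_right_comm _ _ (z _), sign_mul_self]
    simpa using congrArg ((↑) : NNReal → ℝ) hgz

theorem abs_le_sum_abs_apply_single {m n : ℕ} {ι : Type*} [Fintype ι] [DecidableEq ι]
    (T : (ι → ℝ) →ₗ[ℝ] MultilinearMap ℝ (fun _ : Fin m ↦ Fin n → ℝ) ℝ) {x : ι → ℝ}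
    (hx : ∀ i, |x i| ≤ 1) (y : Fin m → Fin n → ℝ) :
    |T x y| ≤ ∑ i, |T (Pi.single i 1) y| := by
  rw [linearMap_apply_eq_sum_single T x, _root_.sum_apply]
  refine (Finset.abs_sum_le_sum_abs _ _).trans (Finset.sum_le_sum fun i _ ↦ ?_)
  rw [_root_.smul_apply, smul_eq_mul, abs_mul]
  exact mul_le_of_le_one_left (abs_nonneg _) (hx i)

theorem exists_forall_abs_multilinearMap_le {m n : ℕ}
    (B : MultilinearMap ℝ (fun _ : Fin m ↦ Fin n → ℝ) ℝ) :
    ∃ C, ∀ y : Fin m → Fin n → ℝ, (∀ k j, |y k j| ≤ 1) → |B y| ≤ C := by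
  induction m with
  | zero => exact ⟨|B 0|, fun y _ ↦ by rw [Subsingleton.elim y 0]⟩
  | succ m ih =>
    choose C hC using fun j ↦ ih (B.curryLeft (Pi.single j 1))
    refine ⟨∑ j, C j, fun y hy ↦ ?_⟩
    rw [← Fin.cons_self_tail y, ← MultilinearMap.curryLeft_apply]
    exact (abs_le_sum_abs_apply_single B.curryLeft (hy 0) _).trans
      (Finset.sum_le_sum fun j _ ↦ hC j _ fun k ↦ hy k.succ)

theorem abs_le_multiOpNorm {p : ℝ} (hp : 0 < p) {N n m : ℕ}
    (T : (Fin N → ℝ) →ₗ[ℝ] MultilinearMap ℝ (fun _ : Fin m ↦ Fin n → ℝ) ℝ)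
    {x : Fin N → ℝ} {y : Fin m → Fin n → ℝ} (hx : lpNorm p x ≤ 1) (hy : ∀ k j, |y k j| ≤ 1) :
    |T x y| ≤ multiOpNorm p T := by
  refine le_csSup ?_ ⟨x, y, hx, fun k ↦ Real.iSup_le (hy k) zero_le_one, rfl⟩
  choose C hC using fun a ↦ exists_forall_abs_multilinearMap_le (T (Pi.single a 1))
  refine ⟨∑ a, C a, ?_⟩
  rintro _ ⟨x, y, hx, hy, rfl⟩
  exact (abs_le_sum_abs_apply_single T (fun a ↦ (abs_le_lpNorm hp x a).trans hx) y).trans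
    (Finset.sum_le_sum fun a _ ↦ hC a y fun k j ↦ (abs_le_linfNorm (y k) j).trans (hy k))

theorem multiOpNorm_nonneg (p : ℝ) {N n m : ℕ}
    (T : (Fin N → ℝ) →ₗ[ℝ] MultilinearMap ℝ (fun _ : Fin m ↦ Fin n → ℝ) ℝ) :
    0 ≤ multiOpNorm p T :=
  sSup_nonneg (by rintro _ ⟨x, y, -, -, rfl⟩; exact abs_nonneg _)

theorem sum_abs_rpow_le_multiOpNorm_rpow {p r : ℝ} (hpr : r.HolderConjugate p) {N n m : ℕ}
    (T : (Fin N → ℝ) →ₗ[ℝ] MultilinearMap ℝ (fun _ : Fin m ↦ Fin n → ℝ) ℝ)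
    {y : Fin m → Fin n → ℝ} (hy : ∀ k j, |y k j| ≤ 1) :
    ∑ a, |T (Pi.single a 1) y| ^ r ≤ multiOpNorm p T ^ r := by
  obtain ⟨x, hx, hxz⟩ := exists_lpNorm_le_one_sum_mul_eq hpr fun a ↦ T (Pi.single a 1) y
  have h_apply : T x y = (∑ a, |T (Pi.single a 1) y| ^ r) ^ (1 / r) := by
    simpa [linearMap_apply_eq_sum_single T x, _root_.sum_apply] using hxz
  have h := (le_abs_self _).trans (abs_le_multiOpNorm hpr.symm.pos T hx hy)
  rwa [h_apply, one_div, rpow_inv_le_iff_of_pos (by positivity) (multiOpNorm_nonneg p T) hpr.pos]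
    at h

theorem mixed_littlewood_of_holderConjugate {p r : ℝ} (hpr : r.HolderConjugate p) (hr₂ : r ≤ 2)
    {N n m : ℕ} (T : (Fin N → ℝ) →ₗ[ℝ] MultilinearMap ℝ (fun _ : Fin m ↦ Fin n → ℝ) ℝ) :
    (∑ i : Fin m → Fin n, (∑ i₁ : Fin N,
        |T (Pi.single i₁ 1) (fun k ↦ Pi.single (i k) 1)| ^ r) ^ (2 / r)) ^ ((1 : ℝ) / 2)
      ≤ khintchineA r ^ m * multiOpNorm p T := by
  have hr₀ := hpr.pos
  have hA := khintchineA_nonneg (r := r) (by linarith)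
  have hT := multiOpNorm_nonneg p T
  have h_minkowski := Lp_sum_le_of_nonneg Finset.univ (s := 2 / r) ((one_le_div hr₀).2 hr₂)
    fun a (i : Fin m → Fin n) ↦
      rpow_nonneg (abs_nonneg (T (Pi.single a 1) (fun k ↦ Pi.single (i k) 1))) r
  have h_khintchine := sum_sum_sq_rpow_le hr₀ hr₂ (fun a ↦ T (Pi.single a 1))
    fun y hy ↦ sum_abs_rpow_le_multiOpNorm_rpow hpr T hy
  simp only [abs_rpow_rpow_two_div hr₀.ne', one_div_div] at h_minkowski
  have h := h_minkowski.trans h_khintchine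
  rw [← rpow_natCast, ← rpow_mul hA, mul_comm r, rpow_mul hA, rpow_natCast,
    ← mul_rpow (by positivity) hT, ← rpow_inv_le_iff_of_pos (by positivity) (by positivity) hr₀,
    ← rpow_mul (by positivity)] at h
  convert h using 2
  field_simp

theorem multilinear_mixed_littlewood_swapped_general {p : ℝ} (hp : 2 ≤ p) {N n m : ℕ}
    (T : (Fin N → ℝ) →ₗ[ℝ] MultilinearMap ℝ (fun _ : Fin m ↦ Fin n → ℝ) ℝ) :
    (∑ i : Fin m → Fin n, (∑ i₁ : Fin N,
        |T (Pi.single i₁ 1) (fun k ↦ Pi.single (i k) 1)| ^ (p / (p - 1)))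
          ^ (2 * (p - 1) / p)) ^ ((1 : ℝ) / 2)
      ≤ khintchineA (p / (p - 1)) ^ m * multiOpNorm p T := by
  have hpr : (p / (p - 1)).HolderConjugate p := (HolderConjugate.conjExponent (by linarith)).symm
  have hr₂ : p / (p - 1) ≤ 2 := by rw [div_le_iff₀ (by linarith)]; linarith
  simpa only [div_div_eq_mul_div] using mixed_littlewood_of_holderConjugate hpr hr₂ T

/-- Multilinear mixed `(ℓ₂, ℓ_{p/(p-1)})`-Littlewood inequality with constant
`(A_{p/(p-1)})^{M-1}`, for an `M`-linear form with `M = m + 1 ≥ 3`. -/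
theorem multilinear_mixed_littlewood_swapped (m : ℕ) (hm : 2 ≤ m) (p : ℝ) (hp : 2 ≤ p) (n : ℕ)
    (T : (Fin n → ℝ) →ₗ[ℝ] MultilinearMap ℝ (fun _ : Fin m => (Fin n → ℝ)) ℝ) :
    (∑ i : Fin m → Fin n, (∑ i₁ : Fin n,
        |T (Pi.single i₁ 1) (fun k => Pi.single (i k) 1)| ^ (p / (p - 1)))
          ^ (2 * (p - 1) / p)) ^ ((1 : ℝ) / 2)
      ≤ khintchineA (p / (p - 1)) ^ m * multiOpNorm p T :=
  multilinear_mixed_littlewood_swapped_general hp T
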